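/- arXiv:2512.04633 — 4 statements merged into one kernel-verified Lean document; each statement's English description precedes it below -/
import Mathlib

section
/- Let K ⊆ ℝ² be a Minkowski centered convex body. Then 2/(s(K)+1) ≤ τ(K) ≤ c(s(K)). -/
open scoped Pointwise RealInnerProductSpace
open Set

noncomputable section

abbrev E2 := EuclideanSpace ℝ (Fin 2)

/-- A convex body: compact convex set with nonempty interior. -/
def IsConvexBody (K : Set E2) : Prop :=
  Convex ℝ K ∧ IsCompact K ∧ (interior K).Nonempty

/-- circumradius `R(K,C)` -/
def circum (K C : Set E2) : ℝ :=
  sInf {ρ : ℝ | 0 < ρ ∧ ∃ t : E2, K ⊆ ρ • C + {t}}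

/-- inradius `r(K,C)` -/
def inrad (K C : Set E2) : ℝ :=
  sSup {ρ : ℝ | 0 < ρ ∧ ∃ t : E2, ρ • C + {t} ⊆ K}

/-- width `w(K,C)` -/
def widthB (K C : Set E2) : ℝ := 2 * inrad (K - K) (C - C)

/-- diameter `D(K,C)` -/
def diamB (K C : Set E2) : ℝ := 2 * circum (K - K) (C - C)

/-- Minkowski asymmetry `s(K)` -/
def minkAsym (K : Set E2) : ℝ :=
  sInf {ρ : ℝ | 0 < ρ ∧ ∃ c : E2, K - {c} ⊆ ρ • ({c} - K)}

/-- `K` is Minkowski centered -/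
def MinkCentered (K : Set E2) : Prop := K ⊆ minkAsym K • (-K)

/-- `τ(K)`: smallest `ρ > 0` with `K ∩ (-K) ⊆ ρ • ((K-K)/2)` -/
def tauB (K : Set E2) : ℝ :=
  sInf {ρ : ℝ | 0 < ρ ∧ K ∩ (-K) ⊆ ρ • ((2:ℝ)⁻¹ • (K - K))}

/-- golden ratio -/
def phiR : ℝ := (1 + Real.sqrt 5) / 2

def cExpr2 (s : ℝ) : ℝ :=
  (s^2+1)^2 / ((s^2-1) * (s^2+2*s-1+2*Real.sqrt (s*(s^2-1))))

def cExpr3 (s : ℝ) : ℝ := 2*(s^2-2*s-1) / ((s-3)*(s+1))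

/-- `ŝ`: the unique `s ∈ (φ,2)` where the two expressions agree. -/
def sHat : ℝ := sInf {s : ℝ | phiR < s ∧ s < 2 ∧ cExpr2 s = cExpr3 s}

def cFun (s : ℝ) : ℝ :=
  if s ≤ phiR then 1 else if s ≤ sHat then cExpr2 s else cExpr3 s

/-- polar body -/
def polarBody (K : Set E2) : Set E2 := {y | ∀ x ∈ K, (inner ℝ x y : ℝ) ≤ 1}

/-- `γ(K)` -/
def gammaB (K : Set E2) : ℝ :=
  sInf {ρ : ℝ | 0 < ρ ∧
    polarBody ((2:ℝ)⁻¹ • (polarBody K - polarBody K)) ⊆ ρ • convexHull ℝ (K ∪ -K)}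

/-- positive hull of two points -/
def posHull2 (a b : E2) : Set E2 := {x | ∃ α β : ℝ, 0 ≤ α ∧ 0 ≤ β ∧ x = α • a + β • b}

/-- asymmetry point of `K`: a point of `bd(K) ∩ bd(−(1/s(K))·K)` -/
def IsAsymPoint (K : Set E2) (p : E2) : Prop :=
  p ∈ frontier K ∧ p ∈ frontier ((-(minkAsym K)⁻¹) • K)

/-- a well-spread triple of asymmetry points -/
def WellSpread (K : Set E2) (p1 p2 p3 : E2) : Prop :=
  IsAsymPoint K p1 ∧ IsAsymPoint K p2 ∧ IsAsymPoint K p3 ∧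
  ∃ a1 a2 a3 : E2, a1 ≠ 0 ∧ a2 ≠ 0 ∧ a3 ≠ 0 ∧
    (∀ x ∈ K, (inner ℝ a1 x : ℝ) ≤ inner ℝ a1 p1) ∧
    (∀ x ∈ K, (inner ℝ a2 x : ℝ) ≤ inner ℝ a2 p2) ∧
    (∀ x ∈ K, (inner ℝ a3 x : ℝ) ≤ inner ℝ a3 p3) ∧
    (0:E2) ∈ interior (convexHull ℝ {p1, p2, p3}) ∧
    (0:E2) ∈ convexHull ℝ {a1, a2, a3}

/-- two points of `bd(K) ∩ bd(-K)` are consecutive -/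
def Consecutive (K : Set E2) (z1 z2 : E2) : Prop :=
  ¬ ∃ z, z ∈ frontier K ∩ frontier (-K) ∧ z ∈ interior (posHull2 z1 z2)

/-- point of the plane from coordinates -/
def pt (x y : ℝ) : E2 := (WithLp.equiv 2 (Fin 2 → ℝ)).symm ![x, y]

/-- the golden house -/
def goldenHouse : Set E2 :=
  convexHull ℝ {pt 1 0, pt (-1) 0, pt 1 (-1), pt (-1) (-1), pt 0 phiR}


lemma phi_pos_facts {s : ℝ} (h : phiR < s) : 1 < s ∧ s + 1 < s^2 := by
  unfold phiR at h
  have h5 : (2:ℝ) < Real.sqrt 5 := by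
    rw [Real.lt_sqrt] <;> norm_num
  have h6 : Real.sqrt 5 ^ 2 = 5 := Real.sq_sqrt (by norm_num)
  constructor
  · linarith
  · nlinarith

lemma phi_lt : phiR < 1.7 := by
  unfold phiR
  have : Real.sqrt 5 < 2.4 := by
    rw [Real.sqrt_lt'] <;> norm_num
  linarith

lemma c2_eq {s : ℝ} (h1 : 1 < s) :
    cExpr2 s * (s^2-1) = s^2+2*s-1 - 2*Real.sqrt (s*(s^2-1)) := by
  unfold cExpr2
  have hq : 0 < s^2-1 := by nlinarith
  have hw : Real.sqrt (s*(s^2-1)) ^ 2 = s*(s^2-1) := Real.sq_sqrt (by positivity)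
  have hw0 := Real.sqrt_nonneg (s*(s^2-1))
  set w := Real.sqrt (s*(s^2-1))
  have : 0 < s^2+2*s-1+2*w := by nlinarith
  rw [div_mul_eq_mul_div, div_eq_iff (by positivity)]
  linear_combination (4:ℝ) * (s^2-1) * hw

lemma c3_eq {s : ℝ} (h1 : 1 < s) (h2 : s ≤ 2) :
    cExpr3 s * (s^2-1) * (3-s) = 2*(s-1)*(1+2*s-s^2) := by
  unfold cExpr3
  have : s - 3 ≠ 0 := by linarith
  have : s + 1 ≠ 0 := by linarith
  field_simp
  ring

lemma sHat_spec {s : ℝ} (h : sHat < s) (h2 : s ≤ 2) : s*(3-s)^2 ≤ s^2-1 := by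
  have hne : {s : ℝ | phiR < s ∧ s < 2 ∧ cExpr2 s = cExpr3 s}.Nonempty := by
    have hc : ContinuousOn (fun x : ℝ => x*(3-x)^2 - (x^2-1)) (Icc 1.7 2) := by fun_prop
    have := intermediate_value_Icc' (by norm_num : (1.7:ℝ) ≤ 2) hc
    obtain ⟨x, hx, hx0⟩ := this (show (0:ℝ) ∈ _ by constructor <;> norm_num)
    simp only at hx0
    have hx2 : x ≠ 2 := by rintro rfl; norm_num at hx0
    have hlt : x < 2 := lt_of_le_of_ne hx.2 hx2
    refine ⟨x, lt_of_lt_of_le phi_lt hx.1, hlt, ?_⟩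
    have h1 : 1 < x := by linarith [hx.1]
    have e2 := c2_eq h1
    have e3 := c3_eq h1 hx.2
    have hw : Real.sqrt (x*(x^2-1)) = x*(3-x) := by
      rw [show x*(x^2-1) = (x*(3-x))^2 by linear_combination (-x)*hx0]
      apply Real.sqrt_sq
      nlinarith
    rw [hw] at e2
    have hq : 0 < (x^2-1)*(3-x) := by
      have : 0 < x^2-1 := by nlinarith
      have : 0 < 3-x := by linarith
      positivity
    apply mul_right_cancel₀ hq.ne'
    linear_combination (3-x)*e2 - e3 - hx0
  obtain ⟨t, ⟨ht1, ht2, ht3⟩, hts⟩ := exists_lt_of_csInf_lt hne h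
  have h1 := (phi_pos_facts ht1).1
  have e2 := c2_eq h1
  have e3 := c3_eq h1 ht2.le
  have hq : 0 < t^2-1 := by nlinarith
  have hw : Real.sqrt (t*(t^2-1)) ^ 2 = t*(t^2-1) := Real.sq_sqrt (by positivity)
  set w := Real.sqrt (t*(t^2-1))
  rw [← ht3, e2] at e3
  have hz : (t*(3-t) - w)^2 = 0 := by linear_combination t*e3 + hw
  have hz' : t*(3-t) = w := by
    have := pow_eq_zero_iff (two_ne_zero) |>.1 hz
    linarith
  have hz2 : t*(3-t)^2 = t^2-1 := by
    apply mul_left_cancel₀ (by linarith : t ≠ 0)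
    rw [← hw, ← hz']; ring
  have : (s - t) * (s^2+s*t+t^2 - 7*(s+t)+9) ≤ 0 := by
    apply mul_nonpos_of_nonneg_of_nonpos
    · linarith
    · nlinarith
  nlinarith

lemma c_bound {s d : ℝ} (h : phiR < s) (h2 : s ≤ 2) (hd0 : 0 ≤ d) (hd : d ≤ 2 - s) :
    (s-d)*(s*d+1) ≤ cFun s * ((s^2-1)*(1+d)) := by
  have h1 := (phi_pos_facts h).1
  have hq : 0 < s^2-1 := by nlinarith
  unfold cFun
  rw [if_neg (not_le.2 h)]
  split_ifs with h3
  · have e2 := c2_eq h1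
    have hw : Real.sqrt (s*(s^2-1)) ^ 2 = s*(s^2-1) := Real.sq_sqrt (by positivity)
    set w := Real.sqrt (s*(s^2-1))
    rw [← mul_assoc, e2]
    have := sq_nonneg (s*(1+d) - w)
    have h4 : 0 ≤ s * (s*(1+d)^2 - 2*w*(1+d) + (s^2-1)) := by nlinarith
    have h5 := nonneg_of_mul_nonneg_right h4 (by linarith)
    nlinarith
  · have h4 := sHat_spec (not_le.1 h3) h2
    have e3 := c3_eq h1 h2
    have hE : 0 < 3 - s := by linarith
    have : (s-d)*(s*d+1) * (3-s) ≤ cExpr3 s * ((s^2-1)*(1+d)) * (3-s) := by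
      have : cExpr3 s * ((s^2-1)*(1+d)) * (3-s) = 2*(s-1)*(1+2*s-s^2)*(1+d) := by
        linear_combination (1+d)*e3
      rw [this]
      have h6 : s*(1+d)*(3-s) ≤ s^2-1 := by
        have : s*(1+d)*(3-s) ≤ s*(3-s)*(3-s) := by gcongr; linarith
        nlinarith
      nlinarith [mul_nonneg (sub_nonneg.2 hd) (sub_nonneg.2 h6)]
    exact le_of_mul_le_mul_right this hE

lemma c_pos {s : ℝ} (h : phiR < s) (h2 : s ≤ 2) : 0 < cFun s := by
  have h1 := (phi_pos_facts h).1
  have := c_bound h h2 le_rfl (by linarith)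
  have hq : 0 < s^2-1 := by nlinarith
  by_contra hc
  push Not at hc
  nlinarith

/-- asymmetric half of the real core -/
lemma core_half {s r L1 L2 L3 α β a b : ℝ} (h : phiR < s) (h2 : s ≤ 2)
    (hL1 : 0 < L1) (hL2 : 0 < L2) (hL3 : 0 < L3)
    (c1 : s*L1 ≤ L2+L3) (c3 : s*L3 ≤ L1+L2) (hle : L2 ≤ L1)
    (hα : 0 ≤ α) (hβ : 0 ≤ β)
    (ha : s*L1 - L3 ≤ s*(a*L2)) (hb : s*L2 - L3 ≤ s*(b*L1))
    (hA : s*(α+β*a) < (r-1)*(α+β)) (hC : s*(α+β+β*a+α*b) < r*(α+β)) :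
    2 < r * cFun s := by
  have h1 := (phi_pos_facts h).1
  have hab : 0 < α + β := by
    rcases (add_nonneg hα hβ).eq_or_lt with h0 | h0
    · have : α = 0 := by linarith
      have : β = 0 := by linarith
      subst_vars; simp at hC
    · exact h0
  have A1 : 0 ≤ (r-1)*(α+β)*L2-(s*α*L2+β*(s*L1-L3)) := by
    nlinarith [mul_le_mul_of_nonneg_left ha hβ, mul_lt_mul_of_pos_right hA hL2]
  have C1 : 0 < r*(α+β)*L1*L2-(s*(α+β)*L1*L2+β*L1*(s*L1-L3)+α*L2*(s*L2-L3)) := by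
    have t1 := mul_le_mul_of_nonneg_left ha (mul_nonneg hβ hL1.le)
    have t2 := mul_le_mul_of_nonneg_left hb (mul_nonneg hα hL2.le)
    have t3 := mul_lt_mul_of_pos_right hC (mul_pos hL1 hL2)
    nlinarith
  have k1 : 0 < s*L2-s*L1+L3 := by nlinarith
  have k2 : 0 ≤ (L1-L2)*(s*(L1+L2)-L3) := mul_nonneg (by linarith) (by nlinarith)
  have key := add_pos_of_nonneg_of_pos (mul_nonneg A1 k2) (mul_pos C1 k1)
  have key2 : 0 < ((α+β)*L2) * (r*L2*(s*(L1-L2)+L3) - (s*(L1+L2)-L3)*(L3+L1-L2)) := by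
    refine lt_of_lt_of_eq key ?_
    ring
  have key3 := pos_of_mul_pos_right key2 (by positivity)
  clear key2 key A1 C1 hA hC ha hb
  have hD : L1 - L2 ≤ (2-s)*L3 := by nlinarith
  have hsD : s*(L1-L2) ≤ L3 := by nlinarith [mul_nonneg hL3.le (sq_nonneg (s-1))]
  have hN : 0 < s*L3-(L1-L2) := by nlinarith
  have k3 : 0 ≤ (L1+L2-s*L3)*(L3-s*(L1-L2)) := mul_nonneg (by linarith) (by linarith)
  have key4 : 2*(s^2-1)*L3*(L3+(L1-L2)) < r*((s*L3-(L1-L2))*(s*(L1-L2)+L3)) := by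
    have e1 := mul_pos key3 hN
    have e2 := mul_nonneg k3 (by linarith : 0 ≤ L3+(L1-L2))
    have : 0 < (2*L2)*(r*((s*L3-(L1-L2))*(s*(L1-L2)+L3)) - 2*(s^2-1)*L3*(L3+(L1-L2))) := by
      nlinarith
    have := pos_of_mul_pos_right this (by positivity)
    linarith
  have hq : 0 < s^2-1 := by nlinarith
  have hd0 : 0 ≤ (L1-L2)/L3 := div_nonneg (by linarith) hL3.le
  have cb := c_bound h h2 hd0 ((div_le_iff₀ hL3).2 hD)
  obtain ⟨d, hd⟩ : ∃ d, d = (L1-L2)/L3 := ⟨_, rfl⟩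
  have hd' : L1 - L2 = d*L3 := by rw [hd]; field_simp
  rw [← hd] at cb hd0
  rw [hd'] at key4
  have key5 : 0 < (L3*L3)*(r*((s-d)*(s*d+1)) - 2*((s^2-1)*(1+d))) := by nlinarith
  have key6 := pos_of_mul_pos_right key5 (by positivity)
  have hm : 0 < (s^2-1)*(1+d) := by positivity
  have hNn : 0 < (s-d)*(s*d+1) := by
    have : 0 < s - d := by
      have : d * L3 < s * L3 := by nlinarith
      have := lt_of_mul_lt_mul_right this hL3.le
      linarith
    positivity
  have hr : 0 < r := by
    by_contra hr
    push Not at hr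
    nlinarith [mul_nonneg (neg_nonneg.2 hr) hNn.le]
  have : 0 < (r * cFun s - 2) * ((s^2-1)*(1+d)) := by
    nlinarith [mul_le_mul_of_nonneg_left cb hr.le]
  have := pos_of_mul_pos_left this hm.le
  linarith

lemma core_real {s r L1 L2 L3 α β a b : ℝ} (h : phiR < s) (h2 : s ≤ 2)
    (hL1 : 0 < L1) (hL2 : 0 < L2) (hL3 : 0 < L3)
    (c1 : s*L1 ≤ L2+L3) (c2 : s*L2 ≤ L1+L3) (c3 : s*L3 ≤ L1+L2)
    (hα : 0 ≤ α) (hβ : 0 ≤ β)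
    (ha : s*L1 - L3 ≤ s*(a*L2)) (hb : s*L2 - L3 ≤ s*(b*L1))
    (hA : s*(α+β*a) < (r-1)*(α+β)) (hB : s*(β+α*b) < (r-1)*(α+β))
    (hC : s*(α+β+β*a+α*b) < r*(α+β)) :
    2 < r * cFun s := by
  rcases le_total L2 L1 with hle | hle
  · exact core_half h h2 hL1 hL2 hL3 c1 c3 hle hα hβ ha hb hA hC
  · exact core_half h h2 hL2 hL1 hL3 c2 (by linarith) hle hβ hα hb ha
      (by linarith) (by linarith)

lemma asym_nonneg (K : Set E2) : 0 ≤ minkAsym K :=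
  Real.sInf_nonneg (fun _ hx => hx.1.le)

lemma asym_le {K : Set E2} {r : ℝ} (hr : 0 < r) (c : E2) (h : K - {c} ⊆ r • ({c} - K)) :
    minkAsym K ≤ r :=
  csInf_le ⟨0, fun _ hx => hx.1.le⟩ ⟨hr, c, h⟩

lemma centered_mem {K : Set E2} (hc : MinkCentered K) {x : E2} (hx : x ∈ K) :
    ∃ y ∈ K, x = -(minkAsym K • y) := by
  obtain ⟨y, hy, rfl⟩ := hc hx
  exact ⟨-y, hy, by simp⟩

lemma exists_ne_zero {K : Set E2} (hK : IsConvexBody K) : ∃ x ∈ K, x ≠ 0 := by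
  by_contra h
  push Not at h
  have h1 : K ⊆ {0} := fun x hx => h x hx
  have h2 := interior_mono h1
  obtain ⟨x, hx⟩ := hK.2.2
  have := h2 hx
  simp [interior_singleton] at this

lemma asym_ge_one {K : Set E2} (hK : IsConvexBody K) (hc : MinkCentered K) :
    1 ≤ minkAsym K := by
  obtain ⟨x0, hx0, hne⟩ := exists_ne_zero hK
  obtain ⟨x, hx, hmax⟩ := hK.2.1.exists_isMaxOn ⟨x0, hx0⟩ continuous_norm.continuousOn
  obtain ⟨y, hy, hxy⟩ := centered_mem hc hx
  have h0 : ‖x0‖ ≤ ‖x‖ := hmax hx0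
  have h1 : ‖y‖ ≤ ‖x‖ := hmax hy
  have h2 : 0 < ‖x0‖ := norm_pos_iff.2 hne
  have h3 : ‖x‖ = minkAsym K * ‖y‖ := by
    conv_lhs => rw [hxy]
    rw [norm_neg, norm_smul, Real.norm_of_nonneg (asym_nonneg K)]
  by_contra h4
  push Not at h4
  nlinarith [norm_nonneg y, asym_nonneg K]

lemma zero_mem_body {K : Set E2} (hK : IsConvexBody K) (hc : MinkCentered K) : (0:E2) ∈ K := by
  obtain ⟨x, hx, -⟩ := exists_ne_zero hK
  obtain ⟨y, hy, hxy⟩ := centered_mem hc hx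
  have hs := asym_ge_one hK hc
  have h1 : 0 < 1 + minkAsym K := by linarith
  have := hK.1 hx hy (show 0 ≤ 1/(1+minkAsym K) by positivity)
    (show 0 ≤ minkAsym K/(1+minkAsym K) by positivity) (by field_simp)
  convert this using 1
  rw [hxy, smul_neg, smul_smul]
  rw [← neg_smul, ← add_smul]
  ring_nf
  simp

lemma tau_mem_one {K : Set E2} : K ∩ (-K) ⊆ (1:ℝ) • ((2:ℝ)⁻¹ • (K - K)) := by
  rintro z ⟨hz, hz'⟩
  rw [one_smul]
  refine ⟨z - (-z), ⟨z, hz, -z, hz', rfl⟩, ?_⟩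
  simp only [sub_neg_eq_add, ← two_smul ℝ z, smul_smul]
  norm_num

lemma lower {K : Set E2} (hK : IsConvexBody K) (hc : MinkCentered K) :
    2 / (minkAsym K + 1) ≤ tauB K := by
  have hs := asym_ge_one hK hc
  have h0 := zero_mem_body hK hc
  refine le_csInf ⟨1, one_pos, tau_mem_one⟩ ?_
  rintro ρ ⟨hρ, hsub⟩
  by_contra hlt
  push Not at hlt
  rw [lt_div_iff₀ (by linarith)] at hlt
  have hd : 0 < 2 - ρ * minkAsym K := by linarith
  obtain ⟨s, hs'⟩ : ∃ s, s = minkAsym K := ⟨_, rfl⟩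
  obtain ⟨s', hs''⟩ : ∃ s', s' = ρ * s / (2 - ρ * s) := ⟨_, rfl⟩
  rw [← hs'] at hs hd hlt
  have hs'pos : 0 < s' := by rw [hs'']; positivity
  have hs'lt : s' < s := by
    rw [hs'', div_lt_iff₀ hd]
    nlinarith
  have hs'eq : s' * (2 - ρ*s) = ρ*s := by rw [hs'']; field_simp
  have : minkAsym K ≤ s' := by
    refine asym_le hs'pos 0 ?_
    rintro _ ⟨x, hx, _, rfl, rfl⟩
    simp only [sub_zero, Set.singleton_sub, zero_sub, Set.image_neg_eq_neg]
    by_contra hxn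
    have hcv : Convex ℝ (s' • (-K)) := (hK.1.neg).smul s'
    have hcl : IsClosed (s' • (-K)) := (hK.2.1.neg.smul s').isClosed
    obtain ⟨f, u, hf, hu⟩ := geometric_hahn_banach_closed_point hcv hcl hxn
    have hf' : ∀ y ∈ K, -(s' * f y) < u := by
      intro y hy
      have := hf (s' • (-y)) ⟨-y, by simpa using hy, rfl⟩
      simpa using this
    obtain ⟨x0, hx0, hmax⟩ := hK.2.1.exists_isMaxOn ⟨x, hx⟩ f.continuous.continuousOn
    have hm1 : f x ≤ f x0 := hmax hx
    have hin : s⁻¹ • x0 ∈ K ∩ (-K) := by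
      constructor
      · have := hK.1 hx0 h0 (show 0 ≤ s⁻¹ by positivity)
          (show 0 ≤ 1 - s⁻¹ by have := inv_le_one_of_one_le₀ hs; linarith) (by ring)
        simpa using this
      · obtain ⟨y, hy, hxy⟩ := centered_mem hc hx0
        rw [← hs'] at hxy
        rw [Set.mem_neg, hxy, smul_neg, neg_neg, smul_smul, inv_mul_cancel₀ (by linarith), one_smul]
        exact hy
    obtain ⟨_, ⟨_, ⟨v, hv, w, hw, rfl⟩, rfl⟩, hz⟩ := hsub hin
    have hz' := congrArg f hz
    simp only [map_smul, map_sub, smul_eq_mul] at hz'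
    have hv' : f v ≤ f x0 := hmax hv
    have hw' := hf' w hw
    have e1 : f x0 = s * (ρ * (2⁻¹ * (f v - f w))) := by
      rw [hz']; field_simp
    have e2 : f x0 * (2 - ρ * s) ≤ - (ρ * s * f w) := by
      have : s*ρ * f v ≤ s*ρ*f x0 := mul_le_mul_of_nonneg_left hv' (by positivity)
      nlinarith
    have e3 : -(ρ * s * f w) = -(s' * f w) * (2 - ρ*s) := by linear_combination f w * hs'eq
    rw [e3] at e2
    have := le_of_mul_le_mul_right e2 hd
    linarith
  linarith

lemma carath3 {Z : Set E2} {x : E2} (hx : x ∈ convexHull ℝ Z) :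
    ∃ w ∈ stdSimplex ℝ (Fin 3), ∃ z : Fin 3 → E2, (∀ i, z i ∈ Z) ∧ ∑ i, w i • z i = x := by
  obtain ⟨ι, _, z, w, hz, hai, hw, hw1, hsum⟩ := eq_pos_convex_span_of_mem_convexHull hx
  have hcard : Fintype.card ι ≤ Fintype.card (Fin 3) := by
    have h1 := hai.card_le_finrank_succ
    have h2 : Module.finrank ℝ (vectorSpan ℝ (Set.range z)) ≤ Module.finrank ℝ E2 :=
      Submodule.finrank_le _
    have h3 : Module.finrank ℝ E2 = 2 := by simp [E2]
    simp only [Fintype.card_fin]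
    omega
  obtain ⟨e⟩ := Function.Embedding.nonempty_of_card_le hcard
  have hne : Nonempty ι := by
    by_contra h
    rw [not_nonempty_iff] at h
    simp at hw1
  obtain ⟨i0⟩ := hne
  have hw' : ∀ i, Function.extend e w 0 (e i) = w i := fun i => e.injective.extend_apply _ _ _
  have hz' : ∀ i, Function.extend e z (fun _ => z i0) (e i) = z i :=
    fun i => e.injective.extend_apply _ _ _
  have hw0 : ∀ j ∉ Set.range e, Function.extend e w 0 j = 0 := by
    intro j hj
    rw [Function.extend_apply' _ _ _ (by simpa using hj)]
    rfl
  refine ⟨Function.extend e w 0, ⟨?_, ?_⟩, Function.extend e z (fun _ => z i0), ?_, ?_⟩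
  · intro j
    by_cases hj : j ∈ Set.range e
    · obtain ⟨i, rfl⟩ := hj
      rw [hw']; exact (hw i).le
    · rw [hw0 j hj]
  · rw [← hw1]
    exact (Fintype.sum_of_injective e e.injective _ _ hw0 (fun i => (hw' i).symm)).symm
  · intro j
    by_cases hj : j ∈ Set.range e
    · obtain ⟨i, rfl⟩ := hj
      rw [hz']; exact hz ⟨i, rfl⟩
    · rw [Function.extend_apply' _ _ _ (by simpa using hj)]
      exact hz ⟨i0, rfl⟩
  · rw [← hsum]
    refine (Fintype.sum_of_injective e e.injective _ _ ?_ ?_).symm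
    · intro j hj
      rw [hw0 j hj, zero_smul]
    · intro i
      rw [hw', hz']

lemma compact_hull {Z : Set E2} (hZ : IsCompact Z) : IsCompact (convexHull ℝ Z) := by
  have : convexHull ℝ Z = (fun q : (Fin 3 → ℝ) × (Fin 3 → E2) => ∑ i, q.1 i • q.2 i) ''
      (stdSimplex ℝ (Fin 3) ×ˢ Set.univ.pi (fun _ => Z)) := by
    ext x
    constructor
    · intro hx
      obtain ⟨w, hw, z, hz, h⟩ := carath3 hx
      exact ⟨(w, z), ⟨hw, fun i _ => hz i⟩, h⟩
    · rintro ⟨⟨w, z⟩, ⟨hw, hz⟩, rfl⟩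
      exact (convex_convexHull ℝ Z).sum_mem (fun i _ => hw.1 i) hw.2
        (fun i _ => subset_convexHull ℝ Z (hz i trivial))
  rw [this]
  refine ((isCompact_stdSimplex ℝ (Fin 3)).prod (isCompact_univ_pi fun _ => hZ)).image ?_
  fun_prop

/-- support function -/
def hsup (K : Set E2) (u : E2) : ℝ := sSup ((fun x => (inner ℝ u x : ℝ)) '' K)

lemma hsup_cont {K : Set E2} (hK : IsCompact K) : Continuous (hsup K) := by
  unfold hsup
  refine hK.continuous_sSup (f := fun u x : E2 => (inner ℝ u x : ℝ)) ?_
  exact continuous_inner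

lemma le_hsup {K : Set E2} (hK : IsCompact K) (u : E2) {x : E2} (hx : x ∈ K) :
    (inner ℝ u x : ℝ) ≤ hsup K u := by
  refine le_csSup ?_ ⟨x, hx, rfl⟩
  exact (hK.image (by fun_prop)).bddAbove

lemma hsup_att {K : Set E2} (hK : IsCompact K) (hne : K.Nonempty) (u : E2) :
    ∃ x ∈ K, (inner ℝ u x : ℝ) = hsup K u := by
  have := (hK.image (f := fun x => (inner ℝ u x : ℝ)) (by fun_prop)).sSup_mem (hne.image _)
  obtain ⟨x, hx, h⟩ := this
  exact ⟨x, hx, h⟩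

lemma hsup_pos {K : Set E2} (hK : IsConvexBody K) {u : E2} (hu : ‖u‖ = 1) {s : ℝ} (hs : 0 ≤ s)
    (h : hsup K (-u) ≤ s * hsup K u) : 0 < hsup K u := by
  by_contra h0
  push Not at h0
  have h1 : ∀ x ∈ K, (inner ℝ u x : ℝ) = 0 := by
    intro x hx
    have h2 := le_hsup hK.2.1 u hx
    have h3 := le_hsup hK.2.1 (-u) hx
    rw [inner_neg_left] at h3
    nlinarith
  obtain ⟨x0, hx0⟩ := hK.2.2
  obtain ⟨ε, hε, hb⟩ := Metric.isOpen_iff.1 isOpen_interior x0 hx0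
  have hx1 : x0 + (ε/2) • u ∈ K := by
    apply interior_subset
    apply hb
    rw [mem_ball_iff_norm, add_sub_cancel_left, norm_smul, hu, Real.norm_of_nonneg (by positivity)]
    linarith
  have e1 := h1 _ hx1
  rw [inner_add_right, h1 _ (interior_subset hx0), inner_smul_right, real_inner_self_eq_norm_sq, hu] at e1
  linarith

lemma g_nonneg {K : Set E2} (hK : IsConvexBody K) (hc : MinkCentered K) (u : E2) :
    hsup K (-u) ≤ minkAsym K * hsup K u := by
  obtain ⟨x0, hx0, -⟩ := exists_ne_zero hK
  obtain ⟨x, hx, h⟩ := hsup_att hK.2.1 ⟨x0, hx0⟩ (-u)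
  obtain ⟨y, hy, rfl⟩ := centered_mem hc hx
  rw [← h, inner_neg_neg, inner_smul_right]
  exact mul_le_mul_of_nonneg_left (le_hsup hK.2.1 u hy) (asym_nonneg K)

lemma sub_of_support {K : Set E2} (hK : IsConvexBody K) (c : E2) {s : ℝ}
    (h : ∀ u : E2, ‖u‖ = 1 → hsup K (-u) + inner ℝ u c ≤ s * (hsup K u - inner ℝ u c)) :
    K - {c} ⊆ s • ({c} - K) := by
  rintro _ ⟨x, hx, _, rfl, rfl⟩
  rename_i c
  by_contra hxn
  have hcv : Convex ℝ (s • ({c} - K)) := ((convex_singleton c).sub hK.1).smul s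
  have hcl : IsClosed (s • ({c} - K)) := by
    have : IsCompact ({c} - K) := by
      rw [sub_eq_add_neg]
      exact isCompact_singleton.add hK.2.1.neg
    exact (this.smul s).isClosed
  obtain ⟨f, t, hf, ht⟩ := geometric_hahn_banach_closed_point hcv hcl hxn
  have hf' : ∀ y ∈ K, s * (f c - f y) < f x - f c := by
    intro y hy
    have := hf (s • (c - y)) ⟨c - y, ⟨c, rfl, y, hy, rfl⟩, rfl⟩
    simp only [map_smul, map_sub, smul_eq_mul] at this ht
    linarith
  obtain ⟨v, hv⟩ : ∃ v : E2, ∀ y, f y = -inner ℝ v y := by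
    refine ⟨-(InnerProductSpace.toDual ℝ E2).symm f, fun y => ?_⟩
    rw [inner_neg_left, neg_neg, InnerProductSpace.toDual_symm_apply]
  have hvne : v ≠ 0 := by
    rintro rfl
    have := hf' x hx
    simp [hv] at this
  have hn : 0 < ‖v‖ := norm_pos_iff.2 hvne
  have hu1 : ‖(‖v‖⁻¹ • v)‖ = 1 := by
    rw [norm_smul, norm_inv, norm_norm, inv_mul_cancel₀ hn.ne']
  obtain ⟨u, hu⟩ : ∃ u, u = ‖v‖⁻¹ • v := ⟨_, rfl⟩
  rw [← hu] at hu1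
  have hvu : v = ‖v‖ • u := by rw [hu, smul_smul, mul_inv_cancel₀ hn.ne', one_smul]
  obtain ⟨y, hy, hyu⟩ := hsup_att hK.2.1 ⟨x, hx⟩ u
  have h1 := hf' y hy
  have h2 := le_hsup hK.2.1 (-u) hx
  have h3 := h u hu1
  have hin : ∀ q : E2, f q = -(‖v‖ * inner ℝ u q) := by
    intro q
    rw [hv]
    conv_lhs => rw [hvu]
    rw [inner_smul_left]
    simp
  rw [hin, hin, hin, hyu] at h1
  rw [inner_neg_left] at h2
  have h4 := mul_le_mul_of_nonneg_left (le_trans (add_le_add_left h2 _) h3) hn.le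
  nlinarith

lemma zero_mem_hull {K : Set E2} (hK : IsConvexBody K) (hc : MinkCentered K) :
    (0:E2) ∈ convexHull ℝ {u : E2 | ‖u‖ = 1 ∧ hsup K (-u) = minkAsym K * hsup K u} := by
  have hs1 := asym_ge_one hK hc
  have hg := g_nonneg hK hc
  have hmin : ∀ r : ℝ, 0 < r → ∀ c, K - {c} ⊆ r • ({c} - K) → minkAsym K ≤ r :=
    fun r hr c h => asym_le hr c h
  generalize minkAsym K = s at *
  have hcont := hsup_cont hK.2.1
  have hS : IsCompact {u : E2 | ‖u‖ = 1} := by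
    have e : {u : E2 | ‖u‖ = 1} = Metric.sphere (0:E2) 1 := by
      ext u
      rw [mem_sphere_zero_iff_norm]
      rfl
    rw [e]
    exact isCompact_sphere (0:E2) 1
  have hZ : IsCompact {u : E2 | ‖u‖ = 1 ∧ hsup K (-u) = s * hsup K u} :=
    hS.inter_right (isClosed_eq (by fun_prop) (by fun_prop))
  by_contra h0
  obtain ⟨f, t, hf0, hf⟩ := geometric_hahn_banach_point_closed (convex_convexHull ℝ _)
    (compact_hull hZ).isClosed h0
  rw [map_zero] at hf0
  have hfZ : ∀ u : E2, ‖u‖ = 1 → hsup K (-u) = s * hsup K u → 0 < f u :=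
    fun u h1 h2 => hf0.trans (hf u (subset_convexHull ℝ _ ⟨h1, h2⟩))
  have hε : ∃ ε > 0, ∀ u : E2, ‖u‖ = 1 → 0 < s * hsup K u - hsup K (-u) + ε * f u := by
    have hB : IsCompact ({u : E2 | ‖u‖ = 1} ∩ {u | f u ≤ 0}) :=
      hS.inter_right (isClosed_le (by fun_prop) (by fun_prop))
    rcases ({u : E2 | ‖u‖ = 1} ∩ {u | f u ≤ 0}).eq_empty_or_nonempty with he | he
    · refine ⟨1, one_pos, fun u hu => ?_⟩
      have : 0 < f u := by
        by_contra hn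
        have : u ∈ ({u : E2 | ‖u‖ = 1} ∩ {u | f u ≤ 0}) := ⟨hu, not_lt.1 hn⟩
        rw [he] at this; exact this
      linarith [hg u]
    · obtain ⟨u0, ⟨hu0, hu0'⟩, hm⟩ := hB.exists_isMinOn he
        (f := fun u => s * hsup K u - hsup K (-u)) (by fun_prop)
      have hη : 0 < s * hsup K u0 - hsup K (-u0) := by
        rcases (hg u0).lt_or_eq with h | h
        · linarith
        · exact absurd (hfZ u0 hu0 h) (not_lt.2 hu0')
      set η := s * hsup K u0 - hsup K (-u0)
      have hF := norm_nonneg f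
      refine ⟨η / (‖f‖ + 1), by positivity, fun u hu => ?_⟩
      by_cases hfu : f u ≤ 0
      · have h1 : η ≤ s * hsup K u - hsup K (-u) := hm ⟨hu, hfu⟩
        have h2 : |f u| ≤ ‖f‖ := by
          have := f.le_opNorm u
          rwa [hu, mul_one] at this
        have h3 := (abs_le.1 h2).1
        have h4 : η / (‖f‖ + 1) * (‖f‖ + 1) = η := by field_simp
        have h5 : 0 < η / (‖f‖ + 1) := by positivity
        nlinarith
      · have h5 : 0 < η / (‖f‖ + 1) := by positivity
        push Not at hfu
        have := mul_pos h5 hfu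
        linarith [hg u]
  obtain ⟨ε, hε, hG⟩ := hε
  obtain ⟨c0, hc0⟩ : ∃ c0 : E2, ∀ y, (inner ℝ y c0 : ℝ) = f y := by
    refine ⟨(InnerProductSpace.toDual ℝ E2).symm f, fun y => ?_⟩
    rw [real_inner_comm, InnerProductSpace.toDual_symm_apply]
  obtain ⟨u1, hu1⟩ : ∃ u : E2, ‖u‖ = 1 := exists_norm_eq E2 zero_le_one
  obtain ⟨um, hum, hm⟩ := hS.exists_isMinOn ⟨u1, hu1⟩
    (f := fun u => s * hsup K u - hsup K (-u) + ε * f u) (by fun_prop)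
  have hmpos := hG um hum
  set m := s * hsup K um - hsup K (-um) + ε * f um
  obtain ⟨uM, huM, hM⟩ := hS.exists_isMaxOn ⟨u1, hu1⟩
    (f := fun u => hsup K u + ε/(1+s) * f u) (by fun_prop)
  set M := hsup K uM + ε/(1+s) * f uM
  obtain ⟨δ, hδ0, hδs, hδM⟩ : ∃ δ > 0, δ < s ∧ δ * (|M| + 1) ≤ m := by
    refine ⟨min (s/2) (m/(|M|+1)), by positivity, ?_, ?_⟩
    · exact lt_of_le_of_lt (min_le_left _ _) (by linarith)
    · rw [← le_div_iff₀ (by positivity)]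
      exact min_le_right _ _
  have := hmin (s - δ) (by linarith) (-(ε/(1+s)) • c0) (sub_of_support hK _ (fun u hu => by
    have e1 : m ≤ s * hsup K u - hsup K (-u) + ε * f u := hm hu
    have e2 : hsup K u + ε/(1+s) * f u ≤ M := hM hu
    rw [inner_smul_right, hc0]
    have e3 : ε/(1+s) * (1+s) = ε := by field_simp
    have e4 : δ * (hsup K u + ε/(1+s) * f u) ≤ δ * (|M| + 1) :=
      mul_le_mul_of_nonneg_left (by linarith [le_abs_self M]) hδ0.le
    have e5 : ε * f u = (ε/(1+s)) * f u + s * ((ε/(1+s)) * f u) := by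
      linear_combination (-f u) * e3
    nlinarith))
  linarith

lemma kkt {K : Set E2} (hK : IsConvexBody K) (hc : MinkCentered K) :
    ∃ (a p : Fin 3 → E2) (L : Fin 3 → ℝ), (∀ i, 0 ≤ L i) ∧ 0 < ∑ i, L i ∧
      ∑ i, L i • a i = 0 ∧ (∀ i, p i ∈ K) ∧ (∀ i, -(minkAsym K • p i) ∈ K) ∧
      (∀ i, (inner ℝ (a i) (p i) : ℝ) = 1) ∧ ∀ i, ∀ x ∈ K, (inner ℝ (a i) x : ℝ) ≤ 1 := by
  obtain ⟨w, ⟨hw0, hw1⟩, u, hu, hsum⟩ := carath3 (zero_mem_hull hK hc)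
  have hs := asym_ge_one hK hc
  have hpos : ∀ i, 0 < hsup K (u i) := fun i => hsup_pos hK (hu i).1 (asym_nonneg K) (hu i).2.le
  have hex : ∀ i, ∃ y ∈ K, -(minkAsym K • y) ∈ K ∧ (inner ℝ (u i) y : ℝ) = hsup K (u i) := by
    intro i
    obtain ⟨x0, hx0, -⟩ := exists_ne_zero hK
    obtain ⟨x, hx, h⟩ := hsup_att hK.2.1 ⟨x0, hx0⟩ (-(u i))
    obtain ⟨y, hy, rfl⟩ := centered_mem hc hx
    refine ⟨y, hy, hx, ?_⟩
    rw [(hu i).2, inner_neg_neg, inner_smul_right] at h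
    exact mul_left_cancel₀ (by linarith) h
  choose p hp hp' hpu using hex
  refine ⟨fun i => (hsup K (u i))⁻¹ • u i, p, fun i => w i * hsup K (u i), ?_, ?_, ?_, hp, hp', ?_, ?_⟩
  · intro i; exact mul_nonneg (hw0 i) (hpos i).le
  · obtain ⟨i, -, hi⟩ : ∃ i ∈ Finset.univ, 0 < w i := by
      apply Finset.exists_lt_of_sum_lt
      rw [hw1]; simp
    exact Finset.sum_pos' (fun i _ => mul_nonneg (hw0 i) (hpos i).le)
      ⟨i, Finset.mem_univ i, mul_pos hi (hpos i)⟩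
  · rw [← hsum]
    refine Finset.sum_congr rfl (fun i _ => ?_)
    rw [smul_smul, mul_assoc, mul_inv_cancel₀ (hpos i).ne', mul_one]
  · intro i
    simp only [inner_smul_left, hpu, conj_trivial]
    exact inv_mul_cancel₀ (hpos i).ne'
  · intro i x hx
    simp only [inner_smul_left, conj_trivial]
    rw [inv_mul_le_iff₀ (hpos i), mul_one]
    exact le_hsup hK.2.1 _ hx

lemma pair_case {s r : ℝ} {L : Fin 3 → ℝ} {a p : Fin 3 → E2} {f : E2 → ℝ} {z : E2} {α β : ℝ}
    (i j k : Fin 3) (h : phiR < s) (h2 : s ≤ 2) (hL : ∀ m, 0 < L m)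
    (hsum : ∀ x : E2, L i * inner ℝ (a i) x + L j * inner ℝ (a j) x + L k * inner ℝ (a k) x = 0)
    (hlow : ∀ m n, -1 ≤ s * inner ℝ (a m) (p n)) (hone : ∀ m, (inner ℝ (a m) (p m) : ℝ) = 1)
    (c1 : s * L i ≤ L j + L k) (c2 : s * L j ≤ L i + L k) (c3 : s * L k ≤ L i + L j)
    (hα : 0 ≤ α) (hβ : 0 ≤ β) (hf : ∀ x : E2, f x = α * inner ℝ (a i) x - β * inner ℝ (a j) x)
    (hz1 : ∀ m, (inner ℝ (a m) z : ℝ) ≤ 1) (hz2 : ∀ m, -1 ≤ (inner ℝ (a m) z : ℝ))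
    (hA : s * f (p i) < (r-1) * f z) (hB : -(s * f (p j)) < (r-1) * f z)
    (hC : s * (f (p i) - f (p j)) < r * f z) (hfz : 0 < f z) : 2 < r * cFun s := by
  obtain ⟨h1, hphi⟩ := phi_pos_facts h
  have hfle : f z ≤ α + β := by
    rw [hf]; nlinarith [hz1 i, hz2 j]
  have s1 := hsum (p i)
  have s2 := hsum (p j)
  rw [hone] at s1 s2
  have ha : s * L i - L k ≤ s * (-inner ℝ (a j) (p i) * L j) := by
    nlinarith [mul_le_mul_of_nonneg_left (hlow k i) (hL k).le]
  have hb : s * L j - L k ≤ s * (-inner ℝ (a i) (p j) * L i) := by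
    nlinarith [mul_le_mul_of_nonneg_left (hlow k j) (hL k).le]
  have hpos : ∀ {x y w : ℝ}, 0 < x → 0 < y → 0 < w → s * w ≤ x + y → s * y ≤ x + w → w ≤ s * x := by
    intro x y w hx hy hw q1 q2
    have e1 : (s-1)*w ≤ x := by
      have : 0 ≤ (s+1) * (x - (s-1)*w) := by nlinarith
      have := nonneg_of_mul_nonneg_right this (by linarith)
      linarith
    nlinarith
  have hi := hpos (hL i) (hL j) (hL k) c3 c2
  have e1 : f (p i) = α + β * (-inner ℝ (a j) (p i)) := by rw [hf, hone]; ring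
  have e2 : -f (p j) = β + α * (-inner ℝ (a i) (p j)) := by rw [hf, hone]; ring
  have han : 0 ≤ -(inner ℝ (a j) (p i) : ℝ) := by
    have : 0 ≤ (s * L j) * (-inner ℝ (a j) (p i)) := by nlinarith
    exact nonneg_of_mul_nonneg_right this (mul_pos (by linarith) (hL j))
  have hr : 0 < r - 1 := by
    have : 0 ≤ s * f (p i) := by
      rw [e1]
      have := mul_nonneg hβ han
      exact mul_nonneg (by linarith) (by linarith)
    exact pos_of_mul_pos_left (lt_of_le_of_lt this hA) hfz.le
  have m1 : (r-1) * f z ≤ (r-1) * (α+β) := mul_le_mul_of_nonneg_left hfle hr.le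
  have m2 : r * f z ≤ r * (α+β) := mul_le_mul_of_nonneg_left hfle (by linarith)
  refine core_real (α := α) (β := β) h h2 (hL i) (hL j) (hL k) c1 c2 c3 hα hβ ha hb ?_ ?_ ?_
  · rw [← e1]; linarith
  · rw [← e2]; linarith
  · have : α + β + β * (-inner ℝ (a j) (p i)) + α * (-inner ℝ (a i) (p j)) = f (p i) - f (p j) := by
      linear_combination -e1 - e2
    rw [this]; linarith

lemma inner2 (a x : E2) : (inner ℝ a x : ℝ) = a 0 * x 0 + a 1 * x 1 := by
  rw [PiLp.inner_apply, Fin.sum_univ_two]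
  simp [mul_comm]

lemma asym_structure {s : ℝ} {L : Fin 3 → ℝ} {a p : Fin 3 → E2} (h1 : 1 < s)
    (hL0 : ∀ m, 0 ≤ L m) (hLs : 0 < ∑ i, L i)
    (hsum : ∀ x : E2, L 0 * inner ℝ (a 0) x + L 1 * inner ℝ (a 1) x + L 2 * inner ℝ (a 2) x = 0)
    (hlow : ∀ m n, -1 ≤ s * inner ℝ (a m) (p n)) (hone : ∀ m, (inner ℝ (a m) (p m) : ℝ) = 1) :
    s * L 0 ≤ L 1 + L 2 ∧ s * L 1 ≤ L 0 + L 2 ∧ s * L 2 ≤ L 0 + L 1 ∧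
    s ≤ 2 ∧ ∀ m, 0 < L m := by
  rw [Fin.sum_univ_three] at hLs
  have s0 := hsum (p 0)
  have s1 := hsum (p 1)
  have s2 := hsum (p 2)
  rw [hone] at s0 s1 s2
  have q : ∀ m n, -L m ≤ s * (L m * inner ℝ (a m) (p n)) := fun m n => by
    nlinarith [mul_le_mul_of_nonneg_left (hlow m n) (hL0 m)]
  have c0 : s * L 0 ≤ L 1 + L 2 := by nlinarith [q 1 0, q 2 0]
  have c1 : s * L 1 ≤ L 0 + L 2 := by nlinarith [q 0 1, q 2 1]
  have c2 : s * L 2 ≤ L 0 + L 1 := by nlinarith [q 0 2, q 1 2]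
  have hp : ∀ {x y w : ℝ}, 0 ≤ x → 0 ≤ y → 0 ≤ w → 0 < x + y + w → s * w ≤ x + y → s * y ≤ x + w →
      0 < x := by
    intro x y w hx hy hw hh q1 q2
    rcases hx.eq_or_lt with e | e
    · subst e; nlinarith
    · exact e
  refine ⟨c0, c1, c2, ?_, ?_⟩
  · by_contra hn
    push Not at hn
    nlinarith
  · have l0 := hp (hL0 0) (hL0 1) (hL0 2) (by linarith) c2 c1
    have l1 := hp (hL0 1) (hL0 0) (hL0 2) (by linarith) (by linarith) (by linarith)
    have l2 := hp (hL0 2) (hL0 0) (hL0 1) (by linarith) (by linarith) (by linarith)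
    intro m
    fin_cases m
    · exact l0
    · exact l1
    · exact l2

lemma rep {s : ℝ} {L : Fin 3 → ℝ} {a p : Fin 3 → E2} (h1 : 1 < s) (hphi : s + 1 < s^2)
    (hL : ∀ m, 0 < L m)
    (hsum : ∀ x : E2, L 0 * inner ℝ (a 0) x + L 1 * inner ℝ (a 1) x + L 2 * inner ℝ (a 2) x = 0)
    (hlow : ∀ m n, -1 ≤ s * inner ℝ (a m) (p n)) (hone : ∀ m, (inner ℝ (a m) (p m) : ℝ) = 1)
    (c0 : s * L 0 ≤ L 1 + L 2) (c1 : s * L 1 ≤ L 0 + L 2) (c2 : s * L 2 ≤ L 0 + L 1) (v : E2) :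
    ∃ c : Fin 3 → ℝ, ∀ x : E2, (inner ℝ v x : ℝ) = ∑ i, c i * (L i * inner ℝ (a i) x) := by
  have hdet : a 0 0 * a 1 1 - a 0 1 * a 1 0 ≠ 0 := by
    intro hd
    have o0 := hone 0
    have o1 := hone 1
    have s0 := hsum (p 0)
    have s1 := hsum (p 1)
    rw [hone] at s0 s1
    have hprod : (inner ℝ (a 0) (p 1) : ℝ) * inner ℝ (a 1) (p 0) = 1 := by
      have : (1:ℝ) = inner ℝ (a 0) (p 0) * inner ℝ (a 1) (p 1) := by rw [o0, o1]; ring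
      rw [this]
      simp only [inner2]
      linear_combination (-(p 0 0 * p 1 1 - p 0 1 * p 1 0)) * hd
    have l1 := hlow 0 1
    have l2 := hlow 1 0
    have k0 := mul_le_mul_of_nonneg_left (hlow 2 0) (hL 2).le
    have k1 := mul_le_mul_of_nonneg_left (hlow 2 1) (hL 2).le
    have hpos : ∀ {x y w : ℝ}, 0 < x → 0 < y → 0 < w → s * w ≤ x + y → s * y ≤ x + w →
        w ≤ s * x := by
      intro x y w hx hy hw q1 q2
      have e1 : (s-1)*w ≤ x := by
        have : 0 ≤ (s+1) * (x - (s-1)*w) := by nlinarith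
        have := nonneg_of_mul_nonneg_right this (by linarith)
        linarith
      nlinarith
    have n1 : (inner ℝ (a 1) (p 0) : ℝ) ≤ 0 := by
      have hi := hpos (hL 0) (hL 1) (hL 2) c2 c1
      have : 0 ≤ (s * L 1) * (-inner ℝ (a 1) (p 0)) := by nlinarith
      have := nonneg_of_mul_nonneg_right this (mul_pos (by linarith) (hL 1))
      linarith
    have n2 : (inner ℝ (a 0) (p 1) : ℝ) ≤ 0 := by
      have hi := hpos (hL 1) (hL 0) (hL 2) (by linarith) c0
      have : 0 ≤ (s * L 0) * (-inner ℝ (a 0) (p 1)) := by nlinarith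
      have := nonneg_of_mul_nonneg_right this (mul_pos (by linarith) (hL 0))
      linarith
    generalize (inner ℝ (a 1) (p 0) : ℝ) = A at *
    generalize (inner ℝ (a 0) (p 1) : ℝ) = B at *
    have hA : -1 < A := by nlinarith
    have hB : -1 < B := by nlinarith
    nlinarith
  have hl0 := (hL 0).ne'
  have hl1 := (hL 1).ne'
  obtain ⟨D, hD⟩ : ∃ D, D = a 0 0 * a 1 1 - a 0 1 * a 1 0 := ⟨_, rfl⟩
  rw [← hD] at hdet
  refine ⟨![(v 0 * a 1 1 - v 1 * a 1 0) / D / L 0,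
    (a 0 0 * v 1 - a 0 1 * v 0) / D / L 1, 0], fun x => ?_⟩
  rw [Fin.sum_univ_three]
  simp only [inner2, Matrix.cons_val_zero, Matrix.cons_val_one, Matrix.cons_val]
  field_simp
  rw [hD]
  ring

lemma upper_incl {K : Set E2} (hK : IsConvexBody K) (hc : MinkCentered K)
    (h : phiR < minkAsym K) : minkAsym K ≤ 2 ∧
    K ∩ (-K) ⊆ cFun (minkAsym K) • ((2:ℝ)⁻¹ • (K - K)) := by
  obtain ⟨a, p, L, hL0, hLs, hsum0, hp, hp', hone, hle⟩ := kkt hK hc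
  obtain ⟨h1, hphi⟩ := phi_pos_facts h
  generalize minkAsym K = s at *
  have hsumF : ∀ x : E2, ∑ i, L i * inner ℝ (a i) x = (0:ℝ) := by
    intro x
    have := congrArg (fun q : E2 => (inner ℝ q x : ℝ)) hsum0
    simpa [sum_inner, inner_smul_left] using this
  have hsum : ∀ x : E2,
      L 0 * inner ℝ (a 0) x + L 1 * inner ℝ (a 1) x + L 2 * inner ℝ (a 2) x = 0 := by
    intro x
    rw [← hsumF x, Fin.sum_univ_three]
  have hlow : ∀ m n, -1 ≤ s * (inner ℝ (a m) (p n) : ℝ) := by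
    intro m n
    have := hle m _ (hp' n)
    rw [inner_neg_right, inner_smul_right] at this
    linarith
  obtain ⟨c0, c1, c2, h2, hL⟩ := asym_structure h1 hL0 hLs hsum hlow hone
  refine ⟨h2, ?_⟩
  rintro z ⟨hz, hz'⟩
  rw [Set.mem_neg] at hz'
  have hcp := c_pos h h2
  by_contra hzn
  have hcv : Convex ℝ (cFun s • ((2:ℝ)⁻¹ • (K - K))) := ((hK.1.sub hK.1).smul _).smul _
  have hcl : IsClosed (cFun s • ((2:ℝ)⁻¹ • (K - K))) := by
    have : IsCompact (K - K) := by
      rw [sub_eq_add_neg]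
      exact hK.2.1.add hK.2.1.neg
    exact ((this.smul _).smul _).isClosed
  obtain ⟨f, t, hf, ht⟩ := geometric_hahn_banach_closed_point hcv hcl hzn
  obtain ⟨r, hr⟩ : ∃ r, r = 2 / cFun s := ⟨_, rfl⟩
  have hrc : r * cFun s = 2 := by rw [hr]; field_simp
  have hrpos : 0 < r := by rw [hr]; positivity
  have hw : ∀ x ∈ K, ∀ y ∈ K, f x - f y < r * f z := by
    intro x hx y hy
    have := (hf _ ⟨_, ⟨_, ⟨x, hx, y, hy, rfl⟩, rfl⟩, rfl⟩).trans ht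
    simp only [map_smul, map_sub, smul_eq_mul] at this
    have := mul_lt_mul_of_pos_left this hrpos
    have e : r * (cFun s * (2⁻¹ * (f x - f y))) = f x - f y := by
      linear_combination (2⁻¹ * (f x - f y)) * hrc
    linarith
  have hfz : 0 < f z := by
    have := hw z hz z hz
    rw [sub_self] at this
    exact pos_of_mul_pos_right this hrpos.le
  obtain ⟨v, hv⟩ : ∃ v : E2, ∀ y, f y = inner ℝ v y := by
    refine ⟨(InnerProductSpace.toDual ℝ E2).symm f, fun y => ?_⟩
    rw [InnerProductSpace.toDual_symm_apply]
  obtain ⟨c, hcr⟩ := rep h1 hphi hL hsum hlow hone c0 c1 c2 v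
  have hmono := Tuple.monotone_sort c
  generalize Tuple.sort c = σ at hmono
  have o1 : c (σ 0) ≤ c (σ 1) := hmono (by decide : (0 : Fin 3) ≤ 1)
  have o2 : c (σ 1) ≤ c (σ 2) := hmono (by decide : (1 : Fin 3) ≤ 2)
  have hsumσ : ∀ x : E2, L (σ 2) * inner ℝ (a (σ 2)) x + L (σ 0) * inner ℝ (a (σ 0)) x
      + L (σ 1) * inner ℝ (a (σ 1)) x = 0 := by
    intro x
    have := hsumF x
    rw [← Equiv.sum_comp σ, Fin.sum_univ_three] at this
    linarith
  have hrepσ : ∀ x : E2, f x = (c (σ 2) - c (σ 1)) * L (σ 2) * inner ℝ (a (σ 2)) x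
      - (c (σ 1) - c (σ 0)) * L (σ 0) * inner ℝ (a (σ 0)) x := by
    intro x
    have e := hcr x
    rw [← hv, ← Equiv.sum_comp σ, Fin.sum_univ_three] at e
    linear_combination e + c (σ 1) * hsumσ x
  have hLσ : L (σ 0) + L (σ 1) + L (σ 2) = L 0 + L 1 + L 2 := by
    have := Equiv.sum_comp σ L
    rwa [Fin.sum_univ_three, Fin.sum_univ_three] at this
  have hcc : ∀ m, (s+1) * L m ≤ L 0 + L 1 + L 2 := by
    intro m
    fin_cases m <;> simp <;> linarith
  have d0 := hcc (σ 0)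
  have d1 := hcc (σ 1)
  have d2 := hcc (σ 2)
  have hneg : ∀ n, f (-(s • p n)) = -(s * f (p n)) := by intro n; simp
  have hfin : 2 < r * cFun s := by
    refine pair_case (f := f) (z := z) (a := a) (p := p) (L := L) (σ 2) (σ 0) (σ 1) h h2 hL hsumσ
      hlow hone (by linarith) (by linarith) (by linarith)
      (mul_nonneg (sub_nonneg.2 o2) (hL _).le) (mul_nonneg (sub_nonneg.2 o1) (hL _).le) hrepσ
      (fun m => hle m z hz) (fun m => ?_) ?_ ?_ ?_ hfz
    · have := hle m _ hz'
      rw [inner_neg_right] at this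
      linarith
    · have := hw z hz _ (hp' (σ 2))
      rw [hneg] at this
      linarith
    · have := hw _ (hp' (σ 0)) _ hz'
      rw [hneg, map_neg] at this
      linarith
    · have := hw _ (hp' (σ 0)) _ (hp' (σ 2))
      rw [hneg, hneg] at this
      linarith
  linarith

theorem stmt4 (K : Set E2) (hK : IsConvexBody K) (hc : MinkCentered K) :
    2 / (minkAsym K + 1) ≤ tauB K ∧ tauB K ≤ cFun (minkAsym K) := by
  refine ⟨lower hK hc, ?_⟩
  have hb : ∀ ρ : ℝ, 0 < ρ → K ∩ (-K) ⊆ ρ • ((2:ℝ)⁻¹ • (K - K)) → tauB K ≤ ρ :=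
    fun ρ h1 h2 => csInf_le ⟨0, fun _ hx => hx.1.le⟩ ⟨h1, h2⟩
  by_cases h : minkAsym K ≤ phiR
  · have : cFun (minkAsym K) = 1 := by unfold cFun; rw [if_pos h]
    rw [this]
    exact hb 1 one_pos tau_mem_one
  · push Not at h
    obtain ⟨h2, hin⟩ := upper_incl hK hc h
    exact hb _ (c_pos h h2) hin
end
end

section
/- For every pair (τ, s) with 1 ≤ s ≤ 2 and 2/(s+1) ≤ τ ≤ c(s), there exists a Minkowski centered convex body K ⊆ ℝ² such that s(K) = s and τ(K) = τ. -/
open scoped Pointwise RealInnerProductSpace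
open Set

noncomputable section

/-- the family of polygons used in the proof -/
def KK (s l1 l2 u1 u2 α β t : ℝ) : Set E2 :=
  {x | (-1 ≤ x 0 ∧ x 0 ≤ s) ∧ (-1 ≤ x 1 ∧ x 1 ≤ s) ∧
    (-1 ≤ -(l1 * x 0 + l2 * x 1) ∧ -(l1 * x 0 + l2 * x 1) ≤ s) ∧
    (-(t * β) ≤ u1 * x 0 + u2 * x 1 ∧ u1 * x 0 + u2 * x 1 ≤ t * α)}

lemma mem_smul_iff' (ρ : ℝ) (hρ : 0 < ρ) (C : Set E2) (x : E2) :
    x ∈ ρ • C ↔ ρ⁻¹ • x ∈ C := Set.mem_smul_set_iff_inv_smul_mem₀ hρ.ne' C x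

lemma mem_tau_iff (ρ : ℝ) (hρ : 0 < ρ) (K : Set E2) (x : E2) :
    x ∈ ρ • ((2:ℝ)⁻¹ • (K - K)) ↔ ∃ k ∈ K, ∃ k' ∈ K, x = (ρ / 2) • (k - k') := by
  constructor
  · rintro ⟨y, ⟨w, ⟨k, hk, k', hk', rfl⟩, rfl⟩, rfl⟩
    refine ⟨k, hk, k', hk', ?_⟩
    simp only [smul_smul]
    congr 1
  · rintro ⟨k, hk, k', hk', rfl⟩
    refine ⟨_, ⟨_, ⟨k, hk, k', hk', rfl⟩, rfl⟩, ?_⟩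
    simp only [smul_smul]
    congr 1

section gen
variable {s l1 l2 u1 u2 α β t : ℝ}

lemma KK_convex : Convex ℝ (KK s l1 l2 u1 u2 α β t) := by
  intro x hx y hy a b ha hb hab
  obtain ⟨⟨h1, h2⟩, ⟨h3, h4⟩, ⟨h5, h6⟩, ⟨h7, h8⟩⟩ := hx
  obtain ⟨⟨g1, g2⟩, ⟨g3, g4⟩, ⟨g5, g6⟩, ⟨g7, g8⟩⟩ := hy
  have key : ∀ c p q : ℝ, c ≤ p → c ≤ q → c ≤ a * p + b * q := by
    intro c p q hp hq
    have h1 := mul_le_mul_of_nonneg_left hp ha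
    have h2 := mul_le_mul_of_nonneg_left hq hb
    have : c = a * c + b * c := by rw [← add_mul, hab, one_mul]
    linarith
  have key' : ∀ c p q : ℝ, p ≤ c → q ≤ c → a * p + b * q ≤ c := by
    intro c p q hp hq
    have h1 := mul_le_mul_of_nonneg_left hp ha
    have h2 := mul_le_mul_of_nonneg_left hq hb
    have : c = a * c + b * c := by rw [← add_mul, hab, one_mul]
    linarith
  simp only [KK, Set.mem_ofPred_eq, PiLp.add_apply, PiLp.smul_apply, smul_eq_mul]
  have e5 := key _ _ _ h5 g5
  have e6 := key' _ _ _ h6 g6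
  have e7 := key _ _ _ h7 g7
  have e8 := key' _ _ _ h8 g8
  refine ⟨⟨key _ _ _ h1 g1, key' _ _ _ h2 g2⟩, ⟨key _ _ _ h3 g3, key' _ _ _ h4 g4⟩,
    ⟨?_, ?_⟩, ⟨?_, ?_⟩⟩ <;> linarith

lemma KK_closed : IsClosed (KK s l1 l2 u1 u2 α β t) := by
  unfold KK
  simp only [Set.ofPred_and]
  refine IsClosed.inter (IsClosed.inter ?_ ?_) (IsClosed.inter (IsClosed.inter ?_ ?_)
    (IsClosed.inter (IsClosed.inter ?_ ?_) (IsClosed.inter ?_ ?_))) <;>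
  · apply isClosed_le <;> fun_prop

lemma KK_bounded (hs : 1 ≤ s) : Bornology.IsBounded (KK s l1 l2 u1 u2 α β t) := by
  refine (Metric.isBounded_closedBall (x := (0 : E2)) (r := 2 * s)).subset ?_
  rintro x ⟨⟨h1, h2⟩, ⟨h3, h4⟩, -⟩
  rw [mem_closedBall_zero_iff, EuclideanSpace.norm_eq]
  apply Real.sqrt_le_iff.2
  refine ⟨by linarith, ?_⟩
  simp only [Fin.sum_univ_two, Real.norm_eq_abs, sq_abs]
  nlinarith

lemma KK_interior (hs : 1 ≤ s) (hα : 0 < α) (hβ : 0 < β) (ht : 1 ≤ t) :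
    (0 : E2) ∈ interior (KK s l1 l2 u1 u2 α β t) := by
  rw [mem_interior]
  refine ⟨{x | (-1 < x 0 ∧ x 0 < s) ∧ (-1 < x 1 ∧ x 1 < s) ∧
    (-1 < -(l1 * x 0 + l2 * x 1) ∧ -(l1 * x 0 + l2 * x 1) < s) ∧
    (-(t * β) < u1 * x 0 + u2 * x 1 ∧ u1 * x 0 + u2 * x 1 < t * α)}, ?_, ?_, ?_⟩
  · rintro x ⟨⟨h1, h2⟩, ⟨h3, h4⟩, ⟨h5, h6⟩, ⟨h7, h8⟩⟩
    exact ⟨⟨h1.le, h2.le⟩, ⟨h3.le, h4.le⟩, ⟨h5.le, h6.le⟩, ⟨h7.le, h8.le⟩⟩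
  · simp only [Set.ofPred_and]
    refine IsOpen.inter (IsOpen.inter ?_ ?_) (IsOpen.inter (IsOpen.inter ?_ ?_)
      (IsOpen.inter (IsOpen.inter ?_ ?_) (IsOpen.inter ?_ ?_))) <;>
    · apply isOpen_lt <;> fun_prop
  · have : 0 < t * α := by positivity
    have : 0 < t * β := by positivity
    simp only [Set.mem_ofPred_eq, PiLp.zero_apply, mul_zero, add_zero, neg_zero]
    refine ⟨⟨?_, ?_⟩, ⟨?_, ?_⟩, ⟨?_, ?_⟩, ⟨?_, ?_⟩⟩ <;> linarith

lemma KK_body (hs : 1 ≤ s) (hα : 0 < α) (hβ : 0 < β) (ht : 1 ≤ t) :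
    IsConvexBody (KK s l1 l2 u1 u2 α β t) :=
  ⟨KK_convex, Metric.isCompact_of_isClosed_isBounded KK_closed (KK_bounded hs),
    ⟨0, KK_interior hs hα hβ ht⟩⟩

lemma KK_mono {t' : ℝ} (hα : 0 < α) (hβ : 0 < β) (h : t ≤ t') :
    KK s l1 l2 u1 u2 α β t ⊆ KK s l1 l2 u1 u2 α β t' := by
  rintro x ⟨h1, h2, h3, h4, h5⟩
  have := mul_le_mul_of_nonneg_right h hα.le
  have := mul_le_mul_of_nonneg_right h hβ.le
  exact ⟨h1, h2, h3, by linarith, by linarith⟩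

lemma KK_scale {t' : ℝ} (hs : 1 ≤ s) (ht : 0 < t) (h : t ≤ t') {x : E2}
    (hx : x ∈ KK s l1 l2 u1 u2 α β t') :
    (t / t') • x ∈ KK s l1 l2 u1 u2 α β t := by
  obtain ⟨⟨h1, h2⟩, ⟨h3, h4⟩, ⟨h5, h6⟩, ⟨h7, h8⟩⟩ := hx
  have ht' : 0 < t' := by linarith
  set r := t / t' with hr
  have hr0 : 0 ≤ r := by positivity
  have hr1 : r ≤ 1 := by rw [hr, div_le_one ht']; exact h
  have hrt : r * t' = t := by rw [hr]; field_simp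
  have key : ∀ p : ℝ, -1 ≤ p → -1 ≤ r * p := by intro p hp; nlinarith
  have key' : ∀ p : ℝ, p ≤ s → r * p ≤ s := by intro p hp; nlinarith
  simp only [KK, Set.mem_ofPred_eq, PiLp.smul_apply, smul_eq_mul]
  have e5 := key _ h5
  have e6 := key' _ h6
  have e7 := mul_le_mul_of_nonneg_left h7 hr0
  have e8 := mul_le_mul_of_nonneg_left h8 hr0
  have f7 : r * (-(t' * β)) = -(t * β) := by rw [← hrt]; ring
  have f8 : r * ((t' * α)) = (t * α) := by rw [← hrt]; ring
  refine ⟨⟨key _ h1, key' _ h2⟩, ⟨key _ h3, key' _ h4⟩,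
    ⟨?_, ?_⟩, ⟨?_, ?_⟩⟩ <;> linarith

lemma KK_neg (hs : 1 ≤ s) (ht : 1 ≤ t) (hαβ : α ≤ s * β) (hβα : β ≤ s * α) {x : E2}
    (hx : x ∈ KK s l1 l2 u1 u2 α β t) :
    s⁻¹ • (-x) ∈ KK s l1 l2 u1 u2 α β t := by
  obtain ⟨⟨h1, h2⟩, ⟨h3, h4⟩, ⟨h5, h6⟩, ⟨h7, h8⟩⟩ := hx
  have hs0 : 0 < s := by linarith
  set r := s⁻¹ with hr
  have hr0 : 0 < r := by positivity
  have hrs : r * s = 1 := by rw [hr]; field_simp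
  have hr1 : r ≤ 1 := by nlinarith
  have key : ∀ p : ℝ, p ≤ s → -1 ≤ r * -p := by intro p hp; nlinarith
  have key' : ∀ p : ℝ, -1 ≤ p → r * -p ≤ s := by intro p hp; nlinarith
  simp only [KK, Set.mem_ofPred_eq, PiLp.smul_apply, PiLp.neg_apply, smul_eq_mul]
  have e5 := key _ h6
  have e6 := key' _ h5
  have e7 := mul_le_mul_of_nonneg_left h7 hr0.le
  have e8 := mul_le_mul_of_nonneg_left h8 hr0.le
  have f7 : r * (t * β) ≤ t * α := by
    have : r * (t * β) ≤ r * (t * (s * α)) := by gcongr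
    have : r * (t * (s * α)) = (r * s) * (t * α) := by ring
    rw [hrs] at this; linarith
  have f8 : r * (t * α) ≤ t * β := by
    have : r * (t * α) ≤ r * (t * (s * β)) := by gcongr
    have : r * (t * (s * β)) = (r * s) * (t * β) := by ring
    rw [hrs] at this; linarith
  refine ⟨⟨key _ h2, key' _ h1⟩, ⟨key _ h4, key' _ h3⟩,
    ⟨?_, ?_⟩, ⟨?_, ?_⟩⟩ <;> linarith

lemma KK_sub (hs : 1 ≤ s) (ht : 1 ≤ t) (hαβ : α ≤ s * β) (hβα : β ≤ s * α) :
    KK s l1 l2 u1 u2 α β t ⊆ s • (-KK s l1 l2 u1 u2 α β t) := by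
  intro x hx
  rw [mem_smul_iff' s (by linarith), Set.mem_neg, ← smul_neg]
  exact KK_neg hs ht hαβ hβα hx

lemma KK_asym (hs : 1 ≤ s) (ht : 1 ≤ t) (hαβ : α ≤ s * β) (hβα : β ≤ s * α)
    (hl1 : 0 < l1) (hl2 : 0 < l2) (p1 p2 p3 : E2)
    (hp1 : p1 ∈ KK s l1 l2 u1 u2 α β t) (hp2 : p2 ∈ KK s l1 l2 u1 u2 α β t)
    (hp3 : p3 ∈ KK s l1 l2 u1 u2 α β t)
    (h1 : p1 0 = s) (h2 : p2 1 = s) (h3 : -(l1 * p3 0 + l2 * p3 1) = s) :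
    minkAsym (KK s l1 l2 u1 u2 α β t) = s := by
  have hmem : s ∈ {ρ : ℝ | 0 < ρ ∧ ∃ c : E2, KK s l1 l2 u1 u2 α β t - {c} ⊆
      ρ • ({c} - KK s l1 l2 u1 u2 α β t)} := by
    refine ⟨by linarith, 0, ?_⟩
    have := KK_sub (l1 := l1) (l2 := l2) (u1 := u1) (u2 := u2) hs ht hαβ hβα
    simpa using this
  apply le_antisymm
  · exact csInf_le ⟨0, fun ρ hρ => hρ.1.le⟩ hmem
  · refine le_csInf ⟨s, hmem⟩ ?_
    rintro ρ ⟨hρ, c, hc⟩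
    have key : ∀ p ∈ KK s l1 l2 u1 u2 α β t, ∃ k ∈ KK s l1 l2 u1 u2 α β t,
        p - c = ρ • (c - k) := by
      intro p hp
      obtain ⟨y, ⟨c', hc', k, hk, rfl⟩, hy⟩ := hc (Set.sub_mem_sub hp (Set.mem_singleton c))
      rw [Set.mem_singleton_iff] at hc'
      subst hc'
      exact ⟨k, hk, hy.symm⟩
    obtain ⟨k1, hk1, e1⟩ := key p1 hp1
    obtain ⟨k2, hk2, e2⟩ := key p2 hp2
    obtain ⟨k3, hk3, e3⟩ := key p3 hp3
    have a1 := congrArg (fun v : E2 => v 0) e1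
    have a2 := congrArg (fun v : E2 => v 1) e2
    have a30 := congrArg (fun v : E2 => v 0) e3
    have a31 := congrArg (fun v : E2 => v 1) e3
    simp only [PiLp.sub_apply, PiLp.smul_apply, smul_eq_mul] at a1 a2 a30 a31
    have b1 := hk1.1.1
    have b2 := hk2.2.1.1
    have b3 := hk3.2.2.1.1
    rw [h1] at a1
    rw [h2] at a2
    have a3 : s + (l1 * c 0 + l2 * c 1) = ρ * (-(l1 * c 0 + l2 * c 1) + (l1 * k3 0 + l2 * k3 1)) := by
      rw [← h3]; linear_combination (-l1) * a30 - l2 * a31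
    have c1 : s - c 0 ≤ ρ * (c 0 + 1) := by
      rw [a1]; apply mul_le_mul_of_nonneg_left _ hρ.le; linarith
    have c2 : s - c 1 ≤ ρ * (c 1 + 1) := by
      rw [a2]; apply mul_le_mul_of_nonneg_left _ hρ.le; linarith
    have c3 : s + (l1 * c 0 + l2 * c 1) ≤ ρ * (-(l1 * c 0 + l2 * c 1) + 1) := by
      rw [a3]; apply mul_le_mul_of_nonneg_left _ hρ.le; linarith
    have d1 := mul_le_mul_of_nonneg_left c1 hl1.le
    have d2 := mul_le_mul_of_nonneg_left c2 hl2.le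
    have : (l1 + l2 + 1) * s ≤ (l1 + l2 + 1) * ρ := by nlinarith
    exact le_of_mul_le_mul_left this (by linarith)

/-- the set defining tau -/
def TS (K : Set E2) : Set ℝ := {ρ : ℝ | 0 < ρ ∧ K ∩ (-K) ⊆ ρ • ((2:ℝ)⁻¹ • (K - K))}

lemma TS_one (K : Set E2) : (1:ℝ) ∈ TS K := by
  refine ⟨one_pos, ?_⟩
  rintro x ⟨hx, hx'⟩
  rw [mem_tau_iff _ one_pos]
  refine ⟨x, hx, -x, hx', ?_⟩
  rw [sub_neg_eq_add, ← two_smul ℝ x, smul_smul]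
  norm_num

lemma TS_bdd (K : Set E2) : BddBelow (TS K) := ⟨0, fun _ h => h.1.le⟩

lemma tau_le_one (K : Set E2) : tauB K ≤ 1 := csInf_le (TS_bdd K) (TS_one K)

lemma tau_scale {K L : Set E2} {q : ℝ} (hq : 1 ≤ q) (h : K ⊆ L)
    (h2 : ∀ x ∈ L, q⁻¹ • x ∈ K) :
    tauB K ≤ q * tauB L ∧ tauB L ≤ q * tauB K := by
  have hq0 : 0 < q := by linarith
  constructor
  · rw [← div_le_iff₀' hq0]
    refine le_csInf ⟨1, TS_one L⟩ ?_
    rintro ρ ⟨hρ, hsub⟩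
    rw [div_le_iff₀' hq0]
    refine csInf_le (TS_bdd K) ⟨by positivity, ?_⟩
    rintro x ⟨hx, hx'⟩
    have := hsub ⟨h hx, h hx'⟩
    rw [mem_tau_iff _ hρ] at this
    obtain ⟨k, hk, k', hk', e⟩ := this
    rw [mem_tau_iff _ (by positivity)]
    refine ⟨_, h2 k hk, _, h2 k' hk', ?_⟩
    rw [e, ← smul_sub, smul_smul]
    congr 1
    field_simp
  · rw [← div_le_iff₀' hq0]
    refine le_csInf ⟨1, TS_one K⟩ ?_
    rintro ρ ⟨hρ, hsub⟩
    rw [div_le_iff₀' hq0]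
    refine csInf_le (TS_bdd L) ⟨by positivity, ?_⟩
    rintro x ⟨hx, hx'⟩
    have hx2 : -(q⁻¹ • x) ∈ K := by rw [← smul_neg]; exact h2 _ hx'
    have := hsub ⟨h2 x hx, hx2⟩
    rw [mem_tau_iff _ hρ] at this
    obtain ⟨k, hk, k', hk', e⟩ := this
    rw [mem_tau_iff _ (by positivity)]
    refine ⟨_, h hk, _, h hk', ?_⟩
    have : x = q • (q⁻¹ • x) := by rw [smul_smul, mul_inv_cancel₀ hq0.ne', one_smul]
    rw [this, e, smul_smul]
    congr 1
    ring

lemma tau_nonneg (K : Set E2) : 0 ≤ tauB K := Real.sInf_nonneg fun _ h => h.1.le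

lemma tau_cont (T : ℝ) (hs : 1 ≤ s) (hα : 0 < α) (hβ : 0 < β) :
    ContinuousOn (fun t => tauB (KK s l1 l2 u1 u2 α β t)) (Icc 1 T) := by
  have key : ∀ t t' : ℝ, 1 ≤ t → t ≤ t' →
      |tauB (KK s l1 l2 u1 u2 α β t) - tauB (KK s l1 l2 u1 u2 α β t')| ≤ t' - t := by
    intro t t' ht htt
    have ht0 : 0 < t := by linarith
    have hq : 1 ≤ t' / t := by rw [le_div_iff₀ ht0]; linarith
    obtain ⟨a, b⟩ := tau_scale hq
      (KK_mono (s := s) (l1 := l1) (l2 := l2) (u1 := u1) (u2 := u2) hα hβ htt) (by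
        intro x hx
        rw [inv_div]
        exact KK_scale hs ht0 htt hx)
    have c1 := tau_le_one (KK s l1 l2 u1 u2 α β t)
    have c2 := tau_le_one (KK s l1 l2 u1 u2 α β t')
    have hq2 : t' / t - 1 ≤ t' - t := by
      rw [div_sub_one ht0.ne', div_le_iff₀ ht0]; nlinarith
    rw [abs_le]
    constructor <;> nlinarith
  have : LipschitzOnWith 1 (fun t => tauB (KK s l1 l2 u1 u2 α β t)) (Icc 1 T) := by
    apply LipschitzOnWith.of_dist_le_mul
    intro x hx y hy
    rw [Real.dist_eq, Real.dist_eq, NNReal.coe_one, one_mul]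
    rcases le_total x y with h | h
    · rw [abs_sub_comm x y, abs_of_nonneg (sub_nonneg.2 h)]
      exact key x y hx.1 h
    · rw [abs_sub_comm, abs_of_nonneg (sub_nonneg.2 h)]
      exact key y x hy.1 h
  exact this.continuousOn

lemma hexa (hs : 1 ≤ s) (hl1 : 0 < l1) (hl2 : 0 < l2) (c1 : l1 * s ≤ l2 + 1)
    (c2 : l2 * s ≤ l1 + 1) (c3 : s ≤ l1 + l2) (y1 y2 y3 : ℝ) (hy : l1 * y1 + l2 * y2 + y3 = 0)
    (b1 : |y1| ≤ s + 1) (b2 : |y2| ≤ s + 1) (b3 : |y3| ≤ s + 1) :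
    ∃ k1 k2 k3 : ℝ, l1 * k1 + l2 * k2 + k3 = 0 ∧ (-1 ≤ k1 ∧ k1 ≤ s) ∧ (-1 ≤ k2 ∧ k2 ≤ s) ∧
      (-1 ≤ k3 ∧ k3 ≤ s) ∧ (-1 ≤ k1 - y1 ∧ k1 - y1 ≤ s) ∧ (-1 ≤ k2 - y2 ∧ k2 - y2 ≤ s) ∧
      (-1 ≤ k3 - y3 ∧ k3 - y3 ≤ s) := by
  rw [abs_le] at b1 b2 b3
  have ex : ∀ y : ℝ, -(s+1) ≤ y ∧ y ≤ s + 1 → ∃ lo hi : ℝ, -1 ≤ lo ∧ y - 1 ≤ lo ∧ hi ≤ s ∧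
      hi ≤ s + y ∧ lo ≤ hi ∧ hi - lo = s + 1 - |y| ∧ ((0 ≤ y ∧ lo = y - 1) ∨ (y ≤ 0 ∧ lo = -1)) := by
    intro y h
    rcases le_total 0 y with h0 | h0
    · exact ⟨y - 1, s, by linarith, le_rfl, le_rfl, by linarith, by linarith,
        by rw [abs_of_nonneg h0]; ring, Or.inl ⟨h0, rfl⟩⟩
    · exact ⟨-1, s + y, by linarith, by linarith, by linarith, by linarith, by linarith,
        by rw [abs_of_nonpos h0]; ring, Or.inr ⟨h0, rfl⟩⟩
  obtain ⟨o1, i1, p1, q1, r1, t1, v1, w1, x1⟩ := ex y1 b1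
  obtain ⟨o2, i2, p2, q2, r2, t2, v2, w2, x2⟩ := ex y2 b2
  obtain ⟨o3, i3, p3, q3, r3, t3, v3, w3, x3⟩ := ex y3 b3
  have A1 : l1 * |y1| ≤ l1 + l2 + 1 := by
    have : |y1| ≤ s + 1 := abs_le.2 b1
    nlinarith
  have A2 : l2 * |y2| ≤ l1 + l2 + 1 := by
    have : |y2| ≤ s + 1 := abs_le.2 b2
    nlinarith
  have A3 : |y3| ≤ l1 + l2 + 1 := by
    have : |y3| ≤ s + 1 := abs_le.2 b3
    linarith
  have L0 : l1 * o1 + l2 * o2 + o3 ≤ 0 := by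
    have B1 : l1 * y1 ≤ l1 + l2 + 1 := le_trans (mul_le_mul_of_nonneg_left (le_abs_self _) hl1.le) A1
    have B2 : l2 * y2 ≤ l1 + l2 + 1 := le_trans (mul_le_mul_of_nonneg_left (le_abs_self _) hl2.le) A2
    have B3 : y3 ≤ l1 + l2 + 1 := (le_abs_self _).trans A3
    have B1' : l1 * (-y1) ≤ l1 + l2 + 1 := le_trans (mul_le_mul_of_nonneg_left (neg_le_abs _) hl1.le) A1
    have B2' : l2 * (-y2) ≤ l1 + l2 + 1 := le_trans (mul_le_mul_of_nonneg_left (neg_le_abs _) hl2.le) A2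
    have B3' : -y3 ≤ l1 + l2 + 1 := (neg_le_abs _).trans A3
    rcases x1 with ⟨g1, rfl⟩ | ⟨g1, rfl⟩ <;> rcases x2 with ⟨g2, rfl⟩ | ⟨g2, rfl⟩ <;>
      rcases x3 with ⟨g3, rfl⟩ | ⟨g3, rfl⟩ <;> linarith
  have H0 : 0 ≤ l1 * i1 + l2 * i2 + i3 := by
    have B1 : l1 * y1 ≤ l1 + l2 + 1 := le_trans (mul_le_mul_of_nonneg_left (le_abs_self _) hl1.le) A1
    have B2 : l2 * y2 ≤ l1 + l2 + 1 := le_trans (mul_le_mul_of_nonneg_left (le_abs_self _) hl2.le) A2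
    have B3 : y3 ≤ l1 + l2 + 1 := (le_abs_self _).trans A3
    have B1' : l1 * (-y1) ≤ l1 + l2 + 1 := le_trans (mul_le_mul_of_nonneg_left (neg_le_abs _) hl1.le) A1
    have B2' : l2 * (-y2) ≤ l1 + l2 + 1 := le_trans (mul_le_mul_of_nonneg_left (neg_le_abs _) hl2.le) A2
    have B3' : -y3 ≤ l1 + l2 + 1 := (neg_le_abs _).trans A3
    have S : l1 + l2 + 1 ≤ l1 * s + l2 * s + s := by nlinarith
    have e1 : i1 = o1 + (s + 1 - |y1|) := by linarith
    have e2 : i2 = o2 + (s + 1 - |y2|) := by linarith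
    have e3 : i3 = o3 + (s + 1 - |y3|) := by linarith
    rw [e1, e2, e3]
    rcases x1 with ⟨g1, rfl⟩ | ⟨g1, rfl⟩ <;> rcases x2 with ⟨g2, rfl⟩ | ⟨g2, rfl⟩ <;>
      rcases x3 with ⟨g3, rfl⟩ | ⟨g3, rfl⟩ <;>
      simp only [abs_of_nonneg, abs_of_nonpos, g1, g2, g3] <;> linarith
  obtain ⟨θ, hθ0, hθ1, hθ⟩ : ∃ θ : ℝ, 0 ≤ θ ∧ θ ≤ 1 ∧
      (l1 * o1 + l2 * o2 + o3) + θ * ((l1 * i1 + l2 * i2 + i3) - (l1 * o1 + l2 * o2 + o3)) = 0 := by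
    generalize l1 * o1 + l2 * o2 + o3 = A at L0
    generalize l1 * i1 + l2 * i2 + i3 = B at H0
    rcases eq_or_lt_of_le (L0.trans H0) with h | h
    · exact ⟨0, le_rfl, zero_le_one, by linarith⟩
    · have hBA : 0 < B - A := by linarith
      refine ⟨-A / (B - A), div_nonneg (by linarith) hBA.le, (div_le_one hBA).2 (by linarith), ?_⟩
      field_simp
      ring
  have lo : ∀ o i : ℝ, o ≤ i → o ≤ o + θ * (i - o) := by
    intro o i h; nlinarith [mul_nonneg hθ0 (sub_nonneg.2 h)]
  have up : ∀ o i : ℝ, o ≤ i → o + θ * (i - o) ≤ i := by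
    intro o i h; nlinarith [mul_le_mul_of_nonneg_right hθ1 (sub_nonneg.2 h)]
  have := lo _ _ v1
  have := lo _ _ v2
  have := lo _ _ v3
  have := up _ _ v1
  have := up _ _ v2
  have := up _ _ v3
  refine ⟨o1 + θ * (i1 - o1), o2 + θ * (i2 - o2), o3 + θ * (i3 - o3),
    by linear_combination hθ, ⟨?_, ?_⟩, ⟨?_, ?_⟩, ⟨?_, ?_⟩, ⟨?_, ?_⟩, ⟨?_, ?_⟩, ⟨?_, ?_⟩⟩ <;>
    linarith

lemma pt_zero (x y : ℝ) : pt x y 0 = x := rfl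
lemma pt_one (x y : ℝ) : pt x y 1 = y := rfl

lemma generic (hs : 1 ≤ s) (hα : 0 < α) (hβ : 0 < β) (hαβ : α ≤ s * β) (hβα : β ≤ s * α)
    (hl1 : 0 < l1) (hl2 : 0 < l2) (p1 p2 p3 z : E2)
    (hp1 : p1 ∈ KK s l1 l2 u1 u2 α β 1) (hp2 : p2 ∈ KK s l1 l2 u1 u2 α β 1)
    (hp3 : p3 ∈ KK s l1 l2 u1 u2 α β 1)
    (hz : z ∈ KK s l1 l2 u1 u2 α β 1) (hz' : -z ∈ KK s l1 l2 u1 u2 α β 1)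
    (h1 : p1 0 = s) (h2 : p2 1 = s) (h3 : -(l1 * p3 0 + l2 * p3 1) = s)
    (τ : ℝ) (hτ1 : 2 / (s + 1) ≤ τ) (hτ2 : τ * (α + β) ≤ 2 * (u1 * z 0 + u2 * z 1)) :
    ∃ K : Set E2, IsConvexBody K ∧ MinkCentered K ∧ minkAsym K = s ∧ tauB K = τ := by
  have hasym : ∀ t, 1 ≤ t → minkAsym (KK s l1 l2 u1 u2 α β t) = s := fun t ht =>
    KK_asym hs ht hαβ hβα hl1 hl2 p1 p2 p3 (KK_mono hα hβ ht hp1) (KK_mono hα hβ ht hp2)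
      (KK_mono hα hβ ht hp3) h1 h2 h3
  set T : ℝ := 1 + (|u1| + |u2|) * s * (1 / α + 1 / β) with hT
  have hT1 : 1 ≤ T := by
    have : 0 ≤ (|u1| + |u2|) * s * (1 / α + 1 / β) := by positivity
    linarith
  have hTα : (|u1| + |u2|) * s ≤ T * α := by
    have : T * α = α + (|u1| + |u2|) * s + (|u1| + |u2|) * s * (α / β) := by
      rw [hT]; field_simp; ring
    have : 0 ≤ (|u1| + |u2|) * s * (α / β) := by positivity
    linarith
  have hTβ : (|u1| + |u2|) * s ≤ T * β := by
    have : T * β = β + (|u1| + |u2|) * s + (|u1| + |u2|) * s * (β / α) := by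
      rw [hT]; field_simp; ring
    have : 0 ≤ (|u1| + |u2|) * s * (β / α) := by positivity
    linarith
  have memT : ∀ x y : ℝ, (-1 ≤ x ∧ x ≤ s) → (-1 ≤ y ∧ y ≤ s) →
      (-1 ≤ -(l1 * x + l2 * y) ∧ -(l1 * x + l2 * y) ≤ s) →
      pt x y ∈ KK s l1 l2 u1 u2 α β T := by
    intro x y hx hy hxy
    refine ⟨hx, hy, hxy, ?_⟩
    simp only [pt_zero, pt_one]
    have : |u1 * x + u2 * y| ≤ (|u1| + |u2|) * s := by
      refine (abs_add_le _ _).trans ?_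
      rw [abs_mul, abs_mul, add_mul]
      have : |x| ≤ s := abs_le.2 ⟨by linarith, hx.2⟩
      have : |y| ≤ s := abs_le.2 ⟨by linarith, hy.2⟩
      gcongr
    rw [abs_le] at this
    exact ⟨by linarith, by linarith⟩
  have c1 : l1 * s ≤ l2 + 1 := by
    have a := hp1.2.1.1
    have b := hp1.2.2.1.1
    rw [h1] at b
    nlinarith
  have c2 : l2 * s ≤ l1 + 1 := by
    have a := hp2.1.1
    have b := hp2.2.2.1.1
    rw [h2] at b
    nlinarith
  have c3 : s ≤ l1 + l2 := by
    have a := hp3.1.1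
    have b := hp3.2.1.1
    nlinarith
  have hlow : tauB (KK s l1 l2 u1 u2 α β T) ≤ 2 / (s + 1) := by
    have hpos : 0 < 2 / (s + 1) := by have : 0 < s := by linarith
                                      positivity
    refine csInf_le (TS_bdd _) ⟨hpos, ?_⟩
    rintro x ⟨hx, hx'⟩
    rw [Set.mem_neg] at hx'
    obtain ⟨⟨d1, -⟩, ⟨d2, -⟩, ⟨d3, -⟩, -⟩ := hx
    obtain ⟨⟨e1, -⟩, ⟨e2, -⟩, ⟨e3, -⟩, -⟩ := hx'
    simp only [PiLp.neg_apply] at e1 e2 e3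
    have sc : ∀ y : ℝ, -1 ≤ y → y ≤ 1 → |(s + 1) * y| ≤ s + 1 := by
      intro y ha hb
      rw [abs_le]; constructor <;> nlinarith
    obtain ⟨k1, k2, k3, ek, f1, f2, f3, g1, g2, g3⟩ := hexa hs hl1 hl2 c1 c2 c3
      ((s + 1) * x 0) ((s + 1) * x 1) ((s + 1) * (-(l1 * x 0 + l2 * x 1))) (by ring)
      (sc _ d1 (by linarith)) (sc _ d2 (by linarith)) (sc _ d3 (by linarith))
    rw [mem_tau_iff _ hpos]
    have ek3 : k3 = -(l1 * k1 + l2 * k2) := by linarith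
    refine ⟨pt k1 k2, memT _ _ f1 f2 (by rw [← ek3]; exact f3),
      pt (k1 - (s + 1) * x 0) (k2 - (s + 1) * x 1), memT _ _ g1 g2 ?_, ?_⟩
    · rw [ek3] at g3
      constructor <;> linarith [g3.1, g3.2]
    · have : s + 1 ≠ 0 := by linarith
      ext i
      fin_cases i
      · simp [pt_zero]; field_simp
      · simp [pt_one]; field_simp
  have hhigh : τ ≤ tauB (KK s l1 l2 u1 u2 α β 1) := by
    refine le_csInf ⟨1, TS_one _⟩ ?_
    rintro ρ ⟨hρ, hsub⟩
    have := hsub ⟨hz, hz'⟩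
    rw [mem_tau_iff _ hρ] at this
    obtain ⟨k, hk, k', hk', e⟩ := this
    have a0 := congrArg (fun v : E2 => v 0) e
    have a1 := congrArg (fun v : E2 => v 1) e
    simp only [PiLp.sub_apply, PiLp.smul_apply, smul_eq_mul] at a0 a1
    have b1 := hk.2.2.2.2
    have b2 := hk'.2.2.2.1
    have : 2 * (u1 * z 0 + u2 * z 1) = ρ * ((u1 * k 0 + u2 * k 1) - (u1 * k' 0 + u2 * k' 1)) := by
      rw [a0, a1]; ring
    have h5 : ρ * ((u1 * k 0 + u2 * k 1) - (u1 * k' 0 + u2 * k' 1)) ≤ ρ * (α + β) := by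
      apply mul_le_mul_of_nonneg_left _ hρ.le; linarith
    exact le_of_mul_le_mul_right (by linarith : τ * (α + β) ≤ ρ * (α + β)) (by linarith)
  have := intermediate_value_Icc' hT1 (tau_cont (l1 := l1) (l2 := l2) (u1 := u1) (u2 := u2) T hs hα hβ)
  obtain ⟨t, ht, hte⟩ := this ⟨hlow.trans hτ1, hhigh⟩
  refine ⟨_, KK_body hs hα hβ ht.1, ?_, hasym t ht.1, hte⟩
  unfold MinkCentered
  rw [hasym t ht.1]
  exact KK_sub hs ht.1 hαβ hβα

end gen

lemma caseA (τ s : ℝ) (hs1 : 1 ≤ s) (hφ : s ^ 2 ≤ s + 1)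
    (hτ1 : 2 / (s + 1) ≤ τ) (hτ2 : τ ≤ 1) :
    ∃ K : Set E2, IsConvexBody K ∧ MinkCentered K ∧ minkAsym K = s ∧ tauB K = τ := by
  have hs0 : 0 < s := by linarith
  have e1 : 1 / s * s = 1 := by field_simp
  have e2 : 2 / s * s = 2 := by field_simp
  have e3 : 1 / s * (-(s * (s - 1))) = -(s - 1) := by field_simp
  have e4 : 2 / s * (-(s * (s - 1))) = -(2 * (s - 1)) := by field_simp
  refine generic (s := s) (l1 := 2 / s) (l2 := 1) (u1 := 1 / s) (u2 := 1) (α := 1) (β := 1) hs1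
    one_pos one_pos (by linarith) (by linarith) (by positivity) one_pos
    (pt s (-1)) (pt (-(s * (s - 1))) s) (pt (-(s * (s - 1))) (s - 2)) (pt 0 1)
    ?_ ?_ ?_ ?_ ?_ rfl rfl ?_ τ hτ1 ?_
  all_goals simp only [KK, Set.mem_ofPred_eq, PiLp.neg_apply, pt_zero, pt_one, e1, e2, e3, e4]
  · refine ⟨⟨?_, ?_⟩, ⟨?_, ?_⟩, ⟨?_, ?_⟩, ⟨?_, ?_⟩⟩ <;> nlinarith
  · refine ⟨⟨?_, ?_⟩, ⟨?_, ?_⟩, ⟨?_, ?_⟩, ⟨?_, ?_⟩⟩ <;> nlinarith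
  · refine ⟨⟨?_, ?_⟩, ⟨?_, ?_⟩, ⟨?_, ?_⟩, ⟨?_, ?_⟩⟩ <;> nlinarith
  · refine ⟨⟨?_, ?_⟩, ⟨?_, ?_⟩, ⟨?_, ?_⟩, ⟨?_, ?_⟩⟩ <;> linarith
  · refine ⟨⟨?_, ?_⟩, ⟨?_, ?_⟩, ⟨?_, ?_⟩, ⟨?_, ?_⟩⟩ <;> linarith
  · linarith
  · linarith

set_option maxHeartbeats 2000000 in
lemma caseB (τ s L : ℝ) (hs1 : 1 < s) (hs2 : s ≤ 2) (hφ : s + 1 < s ^ 2)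
    (hL1 : 1 ≤ L) (hL2 : L * (s - 1) ≤ 1) (hD : 0 < L * (1 + s ^ 2) - 2 * s)
    (hτ1 : 2 / (s + 1) ≤ τ)
    (hτ2 : τ * ((s ^ 2 - 1) * L * (L * (1 + s) - 2)) ≤ 2 * (L * (1 + s ^ 2) - 2 * s)) :
    ∃ K : Set E2, IsConvexBody K ∧ MinkCentered K ∧ minkAsym K = s ∧ tauB K = τ := by
  set D := L * (1 + s ^ 2) - 2 * s with hDdef
  have hs0 : 0 < s := by linarith
  have hL0 : 0 < L := by linarith
  set N := L * (1 + s) - 2 with hN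
  have hN0 : 0 < N := by nlinarith
  have hτ0 : 0 < τ := lt_of_lt_of_le (by positivity) hτ1
  set f := (s ^ 2 - 1) * L * N / D with hf
  have hfD : f * D = (s ^ 2 - 1) * L * N := by rw [hf]; field_simp
  have hfτ : τ * f ≤ 2 := by
    rw [hf, ← mul_div_assoc, div_le_iff₀ hD]; exact hτ2
  have hf2 : 2 ≤ f := by
    rw [hf, le_div_iff₀ hD]
    have : 0 ≤ (s^2-1)*(1+s) * ((s ^ 2 - 1) * L * N - 2 * D) := by
      have : (s^2-1)*(1+s) * ((s ^ 2 - 1) * L * N - 2 * D) =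
        ((s^2-1)*(1+s) * L - 2 * s^2)^2 + 4 * s * (s^2 - s - 1) := by
        rw [hN, hDdef]; ring
      rw [this]
      have : 0 ≤ s * (s^2 - s - 1) := mul_nonneg hs0.le (by linarith)
      nlinarith [sq_nonneg ((s^2-1)*(1+s) * L - 2 * s^2)]
    have h2 := nonneg_of_mul_nonneg_right this (by apply mul_pos <;> nlinarith)
    linarith
  have hfs : f ≤ s + 1 := by
    have h1 : 2 ≤ τ * (s + 1) := by rwa [div_le_iff₀ (by linarith)] at hτ1
    exact le_of_mul_le_mul_left (by linarith : τ * f ≤ τ * (s + 1)) hτ0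
  have hl1 : 0 < s * L - 1 := by nlinarith
  set u1 := (s * L - 1) * N / D with hu1
  set u2 := 1 + (L - s) * N / D with hu2
  have ep1 : u1 * s + u2 * (-1) = f - 1 := by
    rw [hu1, hu2, hf]; ring
  have ep2 : u1 * (-1) + u2 * s = s - f / L := by
    rw [hu1, hu2, hf]; field_simp; ring
  have ep3 : u1 * ((L - s) / (s * L - 1)) + u2 * (-1) = -1 := by
    rw [hu1, hu2]
    field_simp
    ring
  have ez : u1 * 1 + u2 * ((2 - s * L) / L) = 1 := by
    rw [hu1, hu2]
    field_simp
    rw [hN, hDdef]; ring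
  have hfL : f / L ≤ s + 1 := by
    rw [div_le_iff₀ hL0]; nlinarith
  have hfL2 : s * f ≤ f + f / L := by
    have : f * (s - 1) ≤ f / L := by
      rw [le_div_iff₀ hL0]; nlinarith
    linarith
  have hx3a : -1 ≤ (L - s) / (s * L - 1) := by
    rw [le_div_iff₀ hl1]; nlinarith
  have hx3b : (L - s) / (s * L - 1) ≤ s := by
    rw [div_le_iff₀ hl1]; nlinarith
  have ex3 : (s * L - 1) * ((L - s) / (s * L - 1)) = L - s := by field_simp
  have hz2a : -1 ≤ (2 - s * L) / L := by
    rw [le_div_iff₀ hL0]; nlinarith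
  have hz2b : (2 - s * L) / L ≤ 1 := by
    rw [div_le_iff₀ hL0]; nlinarith
  have ez2 : L * ((2 - s * L) / L) = 2 - s * L := by field_simp
  generalize (2 - s * L) / L = z2 at *
  generalize (L - s) / (s * L - 1) = x3 at *
  refine generic (s := s) (l1 := s * L - 1) (l2 := L) (u1 := u1) (u2 := u2) (α := f - 1) (β := 1)
    hs1.le (by linarith) one_pos (by linarith) (by nlinarith) hl1 hL0
    (pt s (-1)) (pt (-1) s) (pt x3 (-1)) (pt 1 z2)
    ?_ ?_ ?_ ?_ ?_ rfl rfl ?_ τ hτ1 ?_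
  all_goals simp only [KK, Set.mem_ofPred_eq, PiLp.neg_apply, pt_zero, pt_one]
  · refine ⟨⟨?_, ?_⟩, ⟨?_, ?_⟩, ⟨?_, ?_⟩, ⟨?_, ?_⟩⟩ <;> nlinarith
  · refine ⟨⟨?_, ?_⟩, ⟨?_, ?_⟩, ⟨?_, ?_⟩, ⟨?_, ?_⟩⟩ <;> nlinarith
  · refine ⟨⟨?_, ?_⟩, ⟨?_, ?_⟩, ⟨?_, ?_⟩, ⟨?_, ?_⟩⟩ <;> linarith
  · refine ⟨⟨?_, ?_⟩, ⟨?_, ?_⟩, ⟨?_, ?_⟩, ⟨?_, ?_⟩⟩ <;> linarith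
  · refine ⟨⟨?_, ?_⟩, ⟨?_, ?_⟩, ⟨?_, ?_⟩, ⟨?_, ?_⟩⟩ <;> linarith
  · linarith
  · linarith

lemma phi_sq : phiR ^ 2 = phiR + 1 := by
  have : Real.sqrt 5 ^ 2 = 5 := Real.sq_sqrt (by norm_num)
  unfold phiR; linear_combination this / 4

lemma phi_pos : 1.6 < phiR := by
  have h : (2.2:ℝ) < Real.sqrt 5 := by
    apply Real.lt_sqrt_of_sq_lt; norm_num
  unfold phiR; linarith

/-- feasibility function -/
def gF (s : ℝ) : ℝ := (s + 1) * (1 + s ^ 2) - 2 * (s - 1) * (s * (s + 1) + Real.sqrt (s * (s ^ 2 - 1)))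

lemma gF_cont : Continuous gF := by unfold gF; fun_prop

lemma r_pos {s : ℝ} (h : 1 < s) : 0 < Real.sqrt (s * (s ^ 2 - 1)) := by
  apply Real.sqrt_pos.2; apply mul_pos <;> nlinarith

lemma r_sq {s : ℝ} (h : 1 < s) : Real.sqrt (s * (s ^ 2 - 1)) ^ 2 = s * (s ^ 2 - 1) := by
  apply Real.sq_sqrt; apply mul_nonneg <;> nlinarith

lemma gF_phi : 0 < gF phiR := by
  have h1 := phi_pos
  have h2 := phi_sq
  have : Real.sqrt (phiR * (phiR ^ 2 - 1)) = phiR := by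
    rw [h2]; rw [add_sub_cancel_right, Real.sqrt_mul_self (by linarith)]
  unfold gF
  rw [this]
  nlinarith

lemma gF_zero {s : ℝ} (h : 1 < s) (h2 : s < 2) (hg : gF s = 0) : cExpr2 s = cExpr3 s := by
  have h3 := r_pos h
  have h4 := r_sq h
  unfold gF at hg
  unfold cExpr2 cExpr3
  generalize Real.sqrt (s * (s ^ 2 - 1)) = r at *
  have d1 : 0 < s ^ 2 - 1 := by nlinarith
  have d2 : 0 < s ^ 2 + 2 * s - 1 + 2 * r := by nlinarith
  rw [div_eq_div_iff (by positivity) (by apply ne_of_lt; nlinarith)]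
  have hQ : (s ^ 2 + 2 * s - 1 + 2 * r) * (s - 1) = 2 * (s ^ 2 + 1) := by
    linear_combination -hg
  have hr2 : 2 * (s - 1) * r = (s + 1) * (1 + 2 * s - s ^ 2) := by linear_combination -hg
  have hE : (s + 1) * ((s ^ 2 + 1) * (s ^ 3 - 7 * s ^ 2 + 9 * s + 1)) = 0 := by
    have : (2 * (s - 1) * r) ^ 2 = ((s + 1) * (1 + 2 * s - s ^ 2)) ^ 2 := by rw [hr2]
    linear_combination (4 * (s - 1) ^ 2) * h4 - this
  have hc : s ^ 3 - 7 * s ^ 2 + 9 * s + 1 = 0 := by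
    rcases mul_eq_zero.1 hE with h | h
    · linarith
    rcases mul_eq_zero.1 h with h | h
    · nlinarith
    · exact h
  linear_combination (-2 * (s ^ 2 - 2 * s - 1) * (s + 1)) * hQ + (s ^ 2 + 1) * (s + 1) * hc

lemma sHat_le {s : ℝ} (h : phiR < s) (h2 : s < 2) (hg : gF s ≤ 0) : sHat ≤ s := by
  have h1 := phi_pos
  obtain ⟨x, hx, hx0⟩ := intermediate_value_Icc' h.le gF_cont.continuousOn ⟨hg, gF_phi.le⟩
  have hne : x ≠ phiR := by
    rintro rfl
    exact absurd hx0 gF_phi.ne'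
  have hx1 : phiR < x := lt_of_le_of_ne hx.1 hne.symm
  refine le_trans (csInf_le ⟨phiR, fun y hy => hy.1.le⟩ ⟨hx1, by linarith [hx.2], ?_⟩) hx.2
  exact gF_zero (by linarith) (by linarith [hx.2]) hx0

theorem stmt5 (τ s : ℝ) (hs1 : 1 ≤ s) (hs2 : s ≤ 2)
    (hτ1 : 2 / (s + 1) ≤ τ) (hτ2 : τ ≤ cFun s) :
    ∃ K : Set E2, IsConvexBody K ∧ MinkCentered K ∧ minkAsym K = s ∧ tauB K = τ := by
  have hp1 := phi_pos
  have hp2 := phi_sq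
  have hs0 : 0 < s := by linarith
  by_cases h1 : s ≤ phiR
  · rw [cFun, if_pos h1] at hτ2
    exact caseA τ s hs1 (by nlinarith) hτ1 hτ2
  have hφ : s + 1 < s ^ 2 := by nlinarith
  push Not at h1
  have hs : 1 < s := by linarith
  have h3 := r_pos hs
  have h4 := r_sq hs
  by_cases h2 : s ≤ sHat
  · rw [cFun, if_neg (not_le.2 h1), if_pos h2] at hτ2
    have hg : 0 ≤ gF s := by
      by_contra hlt
      push Not at hlt
      obtain ⟨x, hx, hx0⟩ := intermediate_value_Icc' h1.le gF_cont.continuousOn ⟨hlt.le, gF_phi.le⟩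
      have hne : x ≠ s := by
        rintro rfl
        exact absurd hx0 hlt.ne
      have hxs : x < s := lt_of_le_of_ne hx.2 hne
      have hne' : phiR ≠ x := by
        rintro rfl
        exact absurd hx0 gF_phi.ne'
      have := sHat_le (lt_of_le_of_ne hx.1 hne') (by linarith) hx0.le
      linarith
    unfold gF at hg
    unfold cExpr2 at hτ2
    generalize Real.sqrt (s * (s ^ 2 - 1)) = r at *
    have hL : 2 * (s * (s + 1) + r) / ((s + 1) * (1 + s ^ 2)) * ((s + 1) * (1 + s ^ 2)) =
      2 * (s * (s + 1) + r) := by field_simp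
    generalize 2 * (s * (s + 1) + r) / ((s + 1) * (1 + s ^ 2)) = L at hL
    have hpos : 0 < (s + 1) * (1 + s ^ 2) := by positivity
    refine caseB τ s L hs hs2 hφ ?_ ?_ ?_ hτ1 ?_
    · have hrs : s ≤ r := by
        apply le_of_sq_le_sq _ h3.le
        rw [h4]; nlinarith
      have : 1 * ((s + 1) * (1 + s ^ 2)) ≤ L * ((s + 1) * (1 + s ^ 2)) := by
        rw [hL]
        have : (s - 1) ^ 2 ≤ 1 := by nlinarith
        nlinarith
      exact le_of_mul_le_mul_right this hpos
    · have : (L * (s - 1)) * ((s + 1) * (1 + s ^ 2)) ≤ 1 * ((s + 1) * (1 + s ^ 2)) := by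
        have : (L * (s - 1)) * ((s + 1) * (1 + s ^ 2)) = (s - 1) * (2 * (s * (s + 1) + r)) := by
          rw [← hL]; ring
        rw [this]; linarith
      exact le_of_mul_le_mul_right this hpos
    · have : 0 < (s + 1) * (L * (1 + s ^ 2) - 2 * s) := by
        have : (s + 1) * (L * (1 + s ^ 2) - 2 * s) = 2 * r := by linear_combination hL
        rw [this]; positivity
      exact pos_of_mul_pos_right this (by linarith)
    · have hD : L * (1 + s ^ 2) - 2 * s = 2 * r / (s + 1) := by
        field_simp; linear_combination hL
      have hLN : L * (L * (1 + s) - 2) =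
          4 * r * (s ^ 2 + 2 * s - 1 + 2 * r) / ((s + 1) * (1 + s ^ 2) ^ 2) := by
        have hL' : L = 2 * (s * (s + 1) + r) / ((s + 1) * (1 + s ^ 2)) := by
          rw [eq_div_iff hpos.ne']; exact hL
        rw [hL']
        field_simp
        linear_combination (-4 - 4 * s) * h4
      have hq : 0 < (s ^ 2 - 1) * (s ^ 2 + 2 * s - 1 + 2 * r) := by
        apply mul_pos <;> nlinarith
      rw [le_div_iff₀ hq] at hτ2
      rw [hD, mul_assoc (s ^ 2 - 1), hLN]
      have : τ * ((s ^ 2 - 1) * (4 * r * (s ^ 2 + 2 * s - 1 + 2 * r) / ((s + 1) * (1 + s ^ 2) ^ 2)))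
        = (τ * ((s ^ 2 - 1) * (s ^ 2 + 2 * s - 1 + 2 * r))) * (4 * r / ((s + 1) * (1 + s ^ 2) ^ 2)) := by
        ring
      rw [this]
      have h6 := mul_le_mul_of_nonneg_right hτ2
        (by positivity : 0 ≤ 4 * r / ((s + 1) * (1 + s ^ 2) ^ 2))
      refine h6.trans (le_of_eq ?_)
      field_simp
      ring
  · rw [cFun, if_neg (not_le.2 h1), if_neg h2] at hτ2
    have hs1' : 0 < s - 1 := by linarith
    have e : 1 / (s - 1) * (s - 1) = 1 := by field_simp
    unfold cExpr3 at hτ2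
    have hd : 0 < (3 - s) * (s + 1) := by apply mul_pos <;> linarith
    have hτ3 : τ * ((3 - s) * (s + 1)) ≤ 2 * (1 + 2 * s - s ^ 2) := by
      rw [← le_div_iff₀ hd]
      refine hτ2.trans_eq ?_
      rw [div_eq_div_iff (by nlinarith) hd.ne']
      ring
    refine caseB τ s (1 / (s - 1)) hs hs2 hφ ?_ e.le ?_ hτ1 ?_
    · rw [le_div_iff₀ hs1']; linarith
    · have : 1 / (s - 1) * (1 + s ^ 2) - 2 * s = (1 + 2 * s - s ^ 2) / (s - 1) := by
        field_simp; ring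
      rw [this]
      apply div_pos _ hs1'; nlinarith
    · have : 2 * (1 / (s - 1) * (1 + s ^ 2) - 2 * s) = 2 * (1 + 2 * s - s ^ 2) / (s - 1) := by
        field_simp; ring
      rw [this]
      have : τ * ((s ^ 2 - 1) * (1 / (s - 1)) * (1 / (s - 1) * (1 + s) - 2)) =
        τ * ((3 - s) * (s + 1)) / (s - 1) := by
        field_simp; ring
      rw [this]
      gcongr
end
end

section
/- Let u₁, …, u₆ ∈ ℝ² \ {0} satisfy u_{i+3} = −u_i for i = 1,2,3 and det(u_i, u_{i+1}) > 0 for all i (indices mod 6), so that the six cones pos{u_i, u_{i+1}} are the six sectors into which the three distinct lines through 0 spanned by u₁, u₂, u₃ divide the plane. If p¹ ∈ pos{u₁, u₂}, p² ∈ pos{u₃, u₄} and p³ ∈ pos{u₅, u₆}, then 0 ∈ conv{p¹, p², p³}. -/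
open scoped Pointwise RealInnerProductSpace
open Set

noncomputable section

theorem hull_aux (p1 p2 p3 : E2) (x y z : ℝ) (hx : 0 ≤ x) (hy : 0 ≤ y) (hz : 0 ≤ z)
    (hs : 0 < x + y + z) (h : x • p1 + y • p2 + z • p3 = 0) :
    (0 : E2) ∈ convexHull ℝ {p1, p2, p3} := by
  have hc := convex_convexHull ℝ ({p1, p2, p3} : Set E2)
  have m1 : p1 ∈ convexHull ℝ ({p1, p2, p3} : Set E2) := subset_convexHull ℝ _ (by simp)
  have m2 : p2 ∈ convexHull ℝ ({p1, p2, p3} : Set E2) := subset_convexHull ℝ _ (by simp)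
  have m3 : p3 ∈ convexHull ℝ ({p1, p2, p3} : Set E2) := subset_convexHull ℝ _ (by simp)
  have key := hc.sum_mem (t := Finset.univ) (w := ![x / (x+y+z), y / (x+y+z), z / (x+y+z)])
    (z := ![p1, p2, p3])
    (by intro i _; fin_cases i <;> simp <;> positivity)
    (by simp [Fin.sum_univ_three]; field_simp)
    (by intro i _; fin_cases i <;> simp [m1, m2, m3])
  have e : ∑ i : Fin 3, (![x / (x+y+z), y / (x+y+z), z / (x+y+z)] i) • (![p1, p2, p3] i)
      = (x+y+z)⁻¹ • (x • p1 + y • p2 + z • p3) := by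
    simp [Fin.sum_univ_three, smul_smul, div_eq_inv_mul]
  rw [e, h, smul_zero] at key
  exact key

theorem stmt6 (u : Fin 6 → E2) (hne : ∀ i, u i ≠ 0)
    (hopp0 : u 3 = -u 0) (hopp1 : u 4 = -u 1) (hopp2 : u 5 = -u 2)
    (hdet : ∀ i : Fin 6, 0 < u i 0 * u (i + 1) 1 - u i 1 * u (i + 1) 0)
    (p1 p2 p3 : E2)
    (h1 : p1 ∈ posHull2 (u 0) (u 1))
    (h2 : p2 ∈ posHull2 (u 2) (u 3))
    (h3 : p3 ∈ posHull2 (u 4) (u 5)) :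
    (0 : E2) ∈ convexHull ℝ {p1, p2, p3} := by
  obtain ⟨a, b, ha, hb, rfl⟩ := h1
  obtain ⟨c, d, hc, hd, rfl⟩ := h2
  obtain ⟨e, f, he, hf, rfl⟩ := h3
  have A0 := hdet 0
  have B0 := hdet 1
  have C0 := hdet 2
  have r0 : (0 : Fin 6) + 1 = 1 := rfl
  have r1 : (1 : Fin 6) + 1 = 2 := rfl
  have r2 : (2 : Fin 6) + 1 = 3 := rfl
  rw [r0] at A0
  rw [r1] at B0
  rw [r2, hopp0] at C0
  rw [hopp0, hopp1, hopp2]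
  clear hdet hne hopp0 hopp1 hopp2
  generalize u 0 = v at *
  generalize u 1 = w at *
  generalize u 2 = t at *
  obtain ⟨A, hA⟩ : ∃ A, A = v 0 * w 1 - v 1 * w 0 := ⟨_, rfl⟩
  obtain ⟨B, hB⟩ : ∃ B, B = w 0 * t 1 - w 1 * t 0 := ⟨_, rfl⟩
  obtain ⟨C, hC⟩ : ∃ C, C = v 0 * t 1 - v 1 * t 0 := ⟨_, rfl⟩
  have Ap : 0 < A := by rw [hA]; exact A0
  have Bp : 0 < B := by rw [hB]; exact B0
  have Cp : 0 < C := by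
    rw [hC]
    simp only [PiLp.neg_apply] at C0
    linarith
  by_cases hs : 0 < (c*e*B + d*e*A + d*f*C) + (e*a*A + f*a*C + f*b*B) + (a*c*C + b*c*B + b*d*A)
  · refine hull_aux _ _ _ _ _ _ (by positivity) (by positivity) (by positivity) hs ?_
    ext i
    fin_cases i <;> simp <;> rw [hA, hB, hC] <;> ring
  · rcases ha.eq_or_lt with rfl | ha'
    · rcases hb.eq_or_lt with rfl | hb'
      · apply subset_convexHull
        simp
      · have hc0 : c = 0 := by
          by_contra hh
          have : 0 < c := lt_of_le_of_ne hc (Ne.symm hh)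
          exact hs (by positivity)
        have hd0 : d = 0 := by
          by_contra hh
          have : 0 < d := lt_of_le_of_ne hd (Ne.symm hh)
          exact hs (by positivity)
        subst hc0 hd0
        apply subset_convexHull
        simp
    · have he0 : e = 0 := by
        by_contra hh
        have : 0 < e := lt_of_le_of_ne he (Ne.symm hh)
        exact hs (by positivity)
      have hf0 : f = 0 := by
        by_contra hh
        have : 0 < f := lt_of_le_of_ne hf (Ne.symm hh)
        exact hs (by positivity)
      subst he0 hf0
      apply subset_convexHull
      simp
end
end

section
/- Let K ⊆ ℝ² be a convex body with s(K) > 1. Then K is Minkowski centered (i.e. K ⊆ s(K)·(−K)) if and only if there exist points p¹, p², p³ ∈ bd(K) ∩ (−(1/s(K))·K) and nonzero vectors a¹, a², a³ with ⟨aⁱ, x⟩ ≤ ⟨aⁱ, pⁱ⟩ for all x ∈ K (i = 1,2,3), such that 0 ∈ int(conv{p¹, p², p³}) and 0 ∈ conv{a¹, a², a³}. -/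
open scoped Pointwise RealInnerProductSpace
open Set

noncomputable section

def Supp (K : Set E2) (a p : E2) : Prop := ∀ x ∈ K, (inner ℝ a x : ℝ) ≤ inner ℝ a p

lemma supp_pos {K : Set E2} (h0 : (0:E2) ∈ interior K) {a p : E2} (ha : a ≠ 0)
    (h : Supp K a p) : 0 < (inner ℝ a p : ℝ) := by
  have hc : Filter.Tendsto (fun t : ℝ => t • a) (nhdsWithin 0 (Ioi 0)) (nhds (0:E2)) := by
    have : Continuous (fun t : ℝ => t • a) := by fun_prop
    have h2 := this.tendsto 0
    simp only [zero_smul] at h2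
    exact h2.mono_left nhdsWithin_le_nhds
  have h1 := hc.eventually (mem_interior_iff_mem_nhds.1 h0)
  have h2 : ∀ᶠ t in nhdsWithin (0:ℝ) (Ioi 0), 0 < t := self_mem_nhdsWithin
  obtain ⟨t, ht, htp⟩ := (h1.and h2).exists
  have h3 := h _ ht
  rw [inner_smul_right, real_inner_self_eq_norm_sq] at h3
  have : 0 < ‖a‖ := norm_pos_iff.2 ha
  have : 0 < t * ‖a‖^2 := by positivity
  linarith

lemma supp_frontier {K : Set E2} {a p : E2} (ha : a ≠ 0) (hp : p ∈ K)
    (h : Supp K a p) : p ∈ frontier K := by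
  refine ⟨subset_closure hp, fun hi => ?_⟩
  have hc : Filter.Tendsto (fun t : ℝ => p + t • a) (nhdsWithin 0 (Ioi 0)) (nhds p) := by
    have : Continuous (fun t : ℝ => p + t • a) := by fun_prop
    have h2 := this.tendsto 0
    simp only [zero_smul, add_zero] at h2
    exact h2.mono_left nhdsWithin_le_nhds
  have h1 := hc.eventually (mem_interior_iff_mem_nhds.1 hi)
  have h2 : ∀ᶠ t in nhdsWithin (0:ℝ) (Ioi 0), 0 < t := self_mem_nhdsWithin
  obtain ⟨t, ht, htp⟩ := (h1.and h2).exists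
  have h3 := h _ ht
  rw [inner_add_right, inner_smul_right, real_inner_self_eq_norm_sq] at h3
  have : 0 < ‖a‖ := norm_pos_iff.2 ha
  have : 0 < t * ‖a‖^2 := by positivity
  linarith

/-- Opposite normals are impossible. -/
lemma no_opposite {K : Set E2} (h0 : (0:E2) ∈ interior K) {s : ℝ} (hs : 1 < s)
    {v p q : E2} (hv : v ≠ 0) (hp : Supp K v p) (hq : Supp K (-v) q)
    (hp' : -(s • p) ∈ K) (hq' : -(s • q) ∈ K) : False := by
  have h1 := supp_pos h0 hv hp
  have h2 := hp _ hq'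
  have h3 := hq _ hp'
  simp only [inner_neg_left, inner_neg_right, inner_smul_right] at h2 h3
  have h4 : s * (s * (inner ℝ v p : ℝ)) ≤ inner ℝ v p := by nlinarith
  nlinarith [mul_pos (sub_pos.2 hs) h1, mul_pos (mul_pos (sub_pos.2 hs) h1) (zero_lt_one.trans hs)]

lemma key2 {K : Set E2} (h0 : (0:E2) ∈ interior K) {s : ℝ} (hs : 1 < s)
    {a b p q u : E2} (ha : a ≠ 0) (hb : b ≠ 0) (hp : Supp K a p) (hq : Supp K b q)
    (hp' : -(s • p) ∈ K) (hq' : -(s • q) ∈ K) {m n : ℝ} (hm : 0 ≤ m) (hn : 0 ≤ n)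
    (hu : u = m • a + n • b) (hu0 : u ≠ 0) :
    0 < (inner ℝ u p : ℝ) ∨ 0 < (inner ℝ u q : ℝ) := by
  have h1 := supp_pos h0 ha hp
  have h2 := supp_pos h0 hb hq
  have h3 := hp _ hq'
  have h4 := hq _ hp'
  simp only [inner_neg_right, inner_smul_right] at h3 h4
  by_contra! hcon
  obtain ⟨c1, c2⟩ := hcon
  rw [hu] at c1 c2
  simp only [inner_add_left, real_inner_smul_left] at c1 c2
  set A : ℝ := inner ℝ a p
  set B : ℝ := inner ℝ b q
  set C : ℝ := inner ℝ a q
  set D : ℝ := inner ℝ b p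
  -- m A + n D ≤ 0, m C + n B ≤ 0, -sC ≤ A, -sD ≤ B
  have e1 : s * (m * A) ≤ n * B := by nlinarith
  have e2 : s * (n * B) ≤ m * A := by nlinarith
  have f1 : 0 ≤ m * A := by positivity
  have f2 : 0 ≤ n * B := by positivity
  have g1 : m * A = 0 := by nlinarith
  have g2 : n * B = 0 := by nlinarith
  have : m = 0 := by rcases mul_eq_zero.1 g1 with h | h; exact h; linarith
  have : n = 0 := by rcases mul_eq_zero.1 g2 with h | h; exact h; linarith
  subst_vars
  simp at hu0

/-- separation with a unit vector -/
lemma sep_unit {C : Set E2} (hC : Convex ℝ C) (hcl : IsClosed C) (hne : C.Nonempty) {x : E2}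
    (hx : x ∉ C) : ∃ u : E2, ‖u‖ = 1 ∧ ∀ y ∈ C, (inner ℝ u y : ℝ) < inner ℝ u x := by
  obtain ⟨f, r, h1, h2⟩ := geometric_hahn_banach_closed_point hC hcl hx
  set v := (InnerProductSpace.toDual ℝ E2).symm f with hv
  have hf : ∀ y, f y = inner ℝ v y := fun y => by
    rw [hv, InnerProductSpace.toDual_symm_apply]
  have hlt : ∀ y ∈ C, (inner ℝ v y : ℝ) < inner ℝ v x := fun y hy => by
    rw [← hf, ← hf]; exact (h1 y hy).trans h2
  have hv0 : v ≠ 0 := by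
    rintro h
    obtain ⟨y, hy⟩ := hne
    have := hlt y hy
    simp [h] at this
  have hn : 0 < ‖v‖ := norm_pos_iff.2 hv0
  refine ⟨‖v‖⁻¹ • v, ?_, fun y hy => ?_⟩
  · rw [norm_smul, norm_inv, norm_norm, inv_mul_cancel₀ hn.ne']
  · rw [real_inner_smul_left, real_inner_smul_left]
    exact mul_lt_mul_of_pos_left (hlt y hy) (inv_pos.2 hn)

lemma int_of_pos {p1 p2 p3 : E2}
    (h : ∀ u : E2, u ≠ 0 → 0 < (inner ℝ u p1 : ℝ) ∨ 0 < (inner ℝ u p2 : ℝ) ∨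
      0 < (inner ℝ u p3 : ℝ)) : (0:E2) ∈ interior (convexHull ℝ {p1, p2, p3}) := by
  have hcont : Continuous (fun u : E2 => max (inner ℝ u p1 : ℝ) (max (inner ℝ u p2) (inner ℝ u p3))) := by
    fun_prop
  have hS : (Metric.sphere (0:E2) 1).Nonempty := NormedSpace.sphere_nonempty.2 zero_le_one
  obtain ⟨u0, hu0, hmin⟩ := (isCompact_sphere (0:E2) 1).exists_isMinOn hS hcont.continuousOn
  set m := max (inner ℝ u0 p1 : ℝ) (max (inner ℝ u0 p2) (inner ℝ u0 p3)) with hm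
  have hmpos : 0 < m := by
    have : u0 ≠ 0 := by rintro rfl; simp at hu0
    rcases h u0 this with h | h | h <;> simp [hm, h]
  rw [mem_interior]
  refine ⟨Metric.ball 0 m, fun x hx => ?_, Metric.isOpen_ball, Metric.mem_ball_self hmpos⟩
  by_contra hxn
  have hfin : ({p1, p2, p3} : Set E2).Finite := by simp
  obtain ⟨u, hu, hlt⟩ := sep_unit (convex_convexHull ℝ _) (hfin.isClosed_convexHull ℝ)
    ⟨p1, subset_convexHull ℝ _ (by simp)⟩ hxn
  have g1 := hlt p1 (subset_convexHull ℝ _ (by simp))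
  have g2 := hlt p2 (subset_convexHull ℝ _ (by simp))
  have g3 := hlt p3 (subset_convexHull ℝ _ (by simp))
  have hle : (inner ℝ u x : ℝ) ≤ ‖x‖ := by
    have := real_inner_le_norm u x
    rwa [hu, one_mul] at this
  have hx' : ‖x‖ < m := by simpa using hx
  have hu' : u ∈ Metric.sphere (0:E2) 1 := by simpa using hu
  have := hmin hu'
  simp only [Set.mem_ofPred_eq] at this
  have h5 : max (inner ℝ u p1 : ℝ) (max (inner ℝ u p2) (inner ℝ u p3)) < inner ℝ u x :=
    max_lt g1 (max_lt g2 g3)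
  linarith

lemma mem_hull3 {a1 a2 a3 x : E2} : x ∈ convexHull ℝ {a1, a2, a3} ↔
    ∃ w1 w2 w3 : ℝ, 0 ≤ w1 ∧ 0 ≤ w2 ∧ 0 ≤ w3 ∧ w1 + w2 + w3 = 1 ∧
      w1 • a1 + w2 • a2 + w3 • a3 = x := by
  constructor
  · intro h
    rw [convexHull_insert (by simp), convexHull_pair, mem_convexJoin] at h
    obtain ⟨y, hy, z, ⟨c, d, hc, hd, hcd, rfl⟩, ⟨e, f, he, hf, hef, rfl⟩⟩ := h
    rw [mem_singleton_iff] at hy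
    subst hy
    refine ⟨e, f * c, f * d, he, by positivity, by positivity, ?_, ?_⟩
    · rw [add_assoc, ← mul_add, hcd, mul_one, hef]
    · module
  · rintro ⟨w1, w2, w3, h1, h2, h3, hs, rfl⟩
    have := (convex_convexHull ℝ {a1, a2, a3}).sum_mem (t := Finset.univ) (w := ![w1, w2, w3])
      (z := ![a1, a2, a3]) (by intro i _; fin_cases i <;> simpa)
      (by simpa [Fin.sum_univ_three] using hs)
      (by intro i _; apply subset_convexHull; fin_cases i <;> simp)
    simpa [Fin.sum_univ_three] using this

lemma hull_compact {A : Set E2} (hA : IsCompact A) : IsCompact (convexHull ℝ A) := by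
  rcases A.eq_empty_or_nonempty with rfl | ⟨a0, ha0⟩
  · simp
  have himg : convexHull ℝ A = (fun z : (Fin 3 → ℝ) × (Fin 3 → E2) => ∑ i, z.1 i • z.2 i) ''
      (stdSimplex ℝ (Fin 3) ×ˢ Set.pi univ (fun _ => A)) := by
    apply Subset.antisymm
    · intro x hx
      obtain ⟨ι, _, z, w, hz, hind, hw, hw1, hsum⟩ := eq_pos_convex_span_of_mem_convexHull hx
      have hcard : Fintype.card ι ≤ 3 := by
        have := hind.card_le_finrank_succ
        have h2 := Submodule.finrank_le (vectorSpan ℝ (Set.range z))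
        rw [finrank_euclideanSpace_fin] at h2
        omega
      obtain ⟨f⟩ : Nonempty (ι ↪ Fin 3) := by
        apply Function.Embedding.nonempty_of_card_le; simpa using hcard
      have e1 : ∀ i, Function.extend f w 0 (f i) = w i := fun i => f.injective.extend_apply _ _ _
      have e2 : ∀ i, Function.extend f z (fun _ => a0) (f i) = z i :=
        fun i => f.injective.extend_apply _ _ _
      have e3 : ∀ j, j ∉ Set.range f → Function.extend f w 0 j = 0 := fun j hj =>
        Function.extend_apply' _ _ _ hj
      have e4 : ∀ j, j ∉ Set.range f → Function.extend f z (fun _ => a0) j = a0 := fun j hj =>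
        Function.extend_apply' _ _ _ hj
      refine ⟨(Function.extend f w 0, Function.extend f z (fun _ => a0)), ⟨⟨fun j => ?_, ?_⟩, fun j _ => ?_⟩, ?_⟩
      · by_cases hj : j ∈ Set.range f
        · obtain ⟨i, rfl⟩ := hj
          simp only [e1]; exact (hw i).le
        · simp only [e3 j hj]; exact le_rfl
      · rw [← hw1]
        exact (Fintype.sum_of_injective f f.injective _ _ (fun j hj => e3 j hj)
          (fun i => (e1 i).symm)).symm
      · by_cases hj : j ∈ Set.range f
        · obtain ⟨i, rfl⟩ := hj
          simp only [e2]; exact hz ⟨i, rfl⟩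
        · simp only [e4 j hj]; exact ha0
      · rw [← hsum]
        exact (Fintype.sum_of_injective f f.injective _ _ (fun j hj => by simp [e3 j hj])
          (fun i => by simp only [e1, e2])).symm
    · rintro _ ⟨⟨w, z⟩, ⟨hw, hz⟩, rfl⟩
      exact (convex_convexHull ℝ A).sum_mem (fun i _ => hw.1 i) hw.2
        (fun i _ => subset_convexHull ℝ A (hz i trivial))
  rw [himg]
  apply IsCompact.image
  · exact (isCompact_stdSimplex ℝ (Fin 3)).prod (isCompact_univ_pi fun _ => hA)
  · fun_prop

lemma mem_neg_inv {K : Set E2} {s : ℝ} (hs : 0 < s) {p : E2} :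
    p ∈ (-s⁻¹) • K ↔ -(s • p) ∈ K := by
  rw [Set.mem_smul_set_iff_inv_smul_mem₀ (by simpa using hs.ne')]
  simp [inv_neg]

lemma centered_iff {K : Set E2} {s : ℝ} (hs : 0 < s) :
    K ⊆ s • (-K) ↔ ∀ x ∈ K, -(s⁻¹ • x) ∈ K := by
  refine forall₂_congr fun x _ => ?_
  rw [Set.mem_smul_set_iff_inv_smul_mem₀ hs.ne', Set.mem_neg]

lemma asym_mem {K : Set E2} {ρ : ℝ} (hρ : 0 < ρ) :
    (∃ c : E2, K - {c} ⊆ ρ • ({c} - K)) ↔ ∃ d : E2, ∀ x ∈ K, d - ρ⁻¹ • x ∈ K := by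
  have key : ∀ c x : E2, x - c ∈ ρ • ({c} - K) ↔ (c + ρ⁻¹ • c) - ρ⁻¹ • x ∈ K := by
    intro c x
    rw [Set.mem_smul_set_iff_inv_smul_mem₀ hρ.ne']
    simp only [Set.singleton_sub, Set.mem_image]
    constructor
    · rintro ⟨y, hy, h⟩
      have : (c + ρ⁻¹ • c) - ρ⁻¹ • x = y := by
        have : y = c - ρ⁻¹ • (x - c) := by rw [← h]; abel
        rw [this]; module
      rwa [this]
    · intro h
      exact ⟨_, h, by module⟩
  constructor
  · rintro ⟨c, hc⟩
    refine ⟨c + ρ⁻¹ • c, fun x hx => (key c x).1 (hc ?_)⟩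
    exact Set.sub_mem_sub hx rfl
  · rintro ⟨d, hd⟩
    refine ⟨(1 + ρ⁻¹)⁻¹ • d, ?_⟩
    rintro _ ⟨x, hx, c, hc, rfl⟩
    rw [mem_singleton_iff] at hc
    subst hc
    apply (key _ x).2
    have h1 : (1 + ρ⁻¹) ≠ 0 := by positivity
    have : (1 + ρ⁻¹)⁻¹ • d + ρ⁻¹ • (1 + ρ⁻¹)⁻¹ • d = d := by
      rw [smul_smul, ← add_smul, ← one_add_mul, mul_inv_cancel₀ h1, one_smul]
    rw [this]
    exact hd x hx

lemma asym_attained {K : Set E2} (hK : IsConvexBody K) (hs : 1 < minkAsym K) :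
    ∃ d : E2, ∀ x ∈ K, d - (minkAsym K)⁻¹ • x ∈ K := by
  obtain ⟨hconv, hcomp, x0, hx0⟩ := hK
  have hx0 : x0 ∈ K := interior_subset hx0
  have hne : {ρ : ℝ | 0 < ρ ∧ ∃ c : E2, K - {c} ⊆ ρ • ({c} - K)}.Nonempty := by
    by_contra h
    rw [Set.not_nonempty_iff_eq_empty] at h
    rw [minkAsym, h, Real.sInf_empty] at hs
    linarith
  obtain ⟨r, -, hr, hrm⟩ := exists_seq_tendsto_sInf hne ⟨0, fun ρ h => h.1.le⟩
  change Filter.Tendsto r Filter.atTop (nhds (minkAsym K)) at hr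
  have hd : ∀ n, ∃ d : E2, ∀ x ∈ K, d - (r n)⁻¹ • x ∈ K := fun n =>
    (asym_mem (hrm n).1).1 (hrm n).2
  choose d hd using hd
  obtain ⟨e, -, φ, hφ, he⟩ := hcomp.tendsto_subseq (fun n => hd n x0 hx0)
  have hri : Filter.Tendsto (fun n => (r (φ n))⁻¹) Filter.atTop (nhds (minkAsym K)⁻¹) :=
    (hr.comp hφ.tendsto_atTop).inv₀ (by linarith)
  refine ⟨e + (minkAsym K)⁻¹ • x0, fun x hx => ?_⟩
  have hlim := (he.add (hri.smul_const x0)).sub (hri.smul_const x)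
  refine hcomp.isClosed.mem_of_tendsto hlim (Filter.Eventually.of_forall fun n => ?_)
  simpa using hd (φ n) x hx

lemma asym_le_s7 {K : Set E2} {ρ : ℝ} (hρ : 0 < ρ) {d : E2} (h : ∀ x ∈ K, d - ρ⁻¹ • x ∈ K) :
    minkAsym K ≤ ρ :=
  csInf_le ⟨0, fun _ h => h.1.le⟩ ⟨hρ, (asym_mem hρ).2 ⟨d, h⟩⟩

lemma zero_int {K : Set E2} (hK : IsConvexBody K) {s : ℝ} (hs : 0 < s)
    (h : ∀ x ∈ K, -(s⁻¹ • x) ∈ K) : (0:E2) ∈ interior K := by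
  obtain ⟨hconv, hcomp, x0, hx0⟩ := hK
  have h1 := h x0 (interior_subset hx0)
  refine hconv.openSegment_interior_self_subset_interior hx0 h1 ?_
  refine ⟨(1 + s)⁻¹, s * (1 + s)⁻¹, by positivity, by positivity, by field_simp, ?_⟩
  rw [smul_neg, smul_smul, mul_assoc, mul_comm (1+s)⁻¹, ← mul_assoc, mul_inv_cancel₀ hs.ne',
    one_mul, add_neg_cancel]

def normals (K : Set E2) (s : ℝ) : Set E2 :=
  {a | ‖a‖ = 1 ∧ ∃ p ∈ K, -(s • p) ∈ K ∧ Supp K a p}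

lemma lim_normals {K : Set E2} (hcomp : IsCompact K) {s : ℝ} {a q b : ℕ → E2}
    (ha : ∀ n, ‖a n‖ = 1) (hq : ∀ n, q n ∈ K) (hq' : ∀ n, -(s • q n) ∈ K)
    (hb : Filter.Tendsto b Filter.atTop (nhds 0))
    (h : ∀ n, Supp K (a n) (q n + b n)) :
    ∃ x ∈ normals K s, ∃ p, ∃ φ : ℕ → ℕ, StrictMono φ ∧
      Filter.Tendsto (a ∘ φ) Filter.atTop (nhds x) ∧
      Filter.Tendsto (q ∘ φ) Filter.atTop (nhds p) := by
  obtain ⟨⟨x, p⟩, ⟨hx, hp⟩, φ, hφ, hl⟩ :=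
    ((isCompact_sphere (0:E2) 1).prod hcomp).tendsto_subseq (x := fun n => (a n, q n))
      (fun n => ⟨by simpa using ha n, hq n⟩)
  have l1 : Filter.Tendsto (a ∘ φ) Filter.atTop (nhds x) :=
    (continuous_fst.tendsto _).comp hl
  have l2 : Filter.Tendsto (q ∘ φ) Filter.atTop (nhds p) :=
    (continuous_snd.tendsto _).comp hl
  refine ⟨x, ⟨by simpa using hx, p, hp, ?_, ?_⟩, p, φ, hφ, l1, l2⟩
  · exact hcomp.isClosed.mem_of_tendsto (l2.const_smul s).neg
      (Filter.Eventually.of_forall fun n => hq' _)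
  · intro y hy
    have l3 := l2.add (hb.comp hφ.tendsto_atTop)
    rw [add_zero] at l3
    exact le_of_tendsto_of_tendsto' (l1.inner tendsto_const_nhds) (l1.inner l3)
      (fun n => h (φ n) y hy)

lemma normals_compact {K : Set E2} (hcomp : IsCompact K) (s : ℝ) : IsCompact (normals K s) := by
  apply IsSeqCompact.isCompact
  intro a ha
  have h1 : ∀ n, ‖a n‖ = 1 := fun n => (ha n).1
  have h2 := fun n => (ha n).2
  choose q hq hq' hs using h2
  obtain ⟨x, hx, p, φ, hφ, l1, l2⟩ := lim_normals (b := fun _ => 0) hcomp h1 hq hq'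
    tendsto_const_nhds (fun n => by simpa using hs n)
  exact ⟨x, hx, φ, hφ, l1⟩

lemma zero_mem_hull_s7 {K : Set E2} (hK : IsConvexBody K) (hs : 1 < minkAsym K)
    (h : ∀ x ∈ K, -((minkAsym K)⁻¹ • x) ∈ K) :
    (0:E2) ∈ convexHull ℝ (normals K (minkAsym K)) := by
  obtain ⟨hconv, hcomp, x0, hx0⟩ := id hK
  have hx0 : x0 ∈ K := interior_subset hx0
  set s := minkAsym K with hsdef
  have hs0 : 0 < s := by linarith
  by_contra hn
  -- a vector c with ⟨a,c⟩ > 0 on the normals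
  obtain ⟨c, hc⟩ : ∃ c : E2, ∀ a ∈ normals K s, 0 < (inner ℝ a c : ℝ) := by
    rcases (normals K s).eq_empty_or_nonempty with he | hne
    · exact ⟨0, by simp [he]⟩
    obtain ⟨u, -, hu⟩ := sep_unit (convex_convexHull ℝ _)
      (hull_compact (normals_compact hcomp s)).isClosed hne.convexHull hn
    refine ⟨-u, fun a ha => ?_⟩
    have := hu a (subset_convexHull ℝ _ ha)
    rw [inner_zero_right] at this
    rw [inner_neg_right, real_inner_comm]; linarith
  set ε : ℕ → ℝ := fun n => 1 / ((n:ℝ) + 1) with hε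
  have hεp : ∀ n, 0 < ε n := fun n => by simp only [hε]; positivity
  have hεl : Filter.Tendsto ε Filter.atTop (nhds 0) := tendsto_one_div_add_atTop_nhds_zero_nat
  have hbad : ∀ n, ∃ x ∈ K, (-(ε n • c)) - ((s / (1 + ε n ^ 2))⁻¹) • x ∉ K := by
    intro n
    by_contra! hcon
    have hpos : 0 < s / (1 + ε n ^ 2) := by positivity
    have := asym_le_s7 hpos hcon
    rw [← hsdef, le_div_iff₀ (by positivity)] at this
    nlinarith [mul_pos hs0 (pow_pos (hεp n) 2)]
  choose x hx hxn using hbad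
  have hsep := fun n => sep_unit hconv hcomp.isClosed ⟨x0, hx0⟩ (hxn n)
  choose a ha1 ha2 using hsep
  set q : ℕ → E2 := fun n => -(s⁻¹ • x n) with hq
  have hqK : ∀ n, q n ∈ K := fun n => h _ (hx n)
  have hqx : ∀ n, -(s • q n) = x n := fun n => by
    simp only [hq, smul_neg, neg_neg, smul_smul, mul_inv_cancel₀ hs0.ne', one_smul]
  set b : ℕ → E2 := fun n => (ε n ^ 2) • q n - ε n • c with hb
  have hpt : ∀ n, (-(ε n • c)) - ((s / (1 + ε n ^ 2))⁻¹) • x n = q n + b n := fun n => by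
    have e1 : (s / (1 + ε n ^ 2))⁻¹ = s⁻¹ + ε n ^ 2 * s⁻¹ := by
      rw [inv_div, div_eq_mul_inv]; ring
    rw [e1]
    simp only [hb, hq]
    module
  have hbl : Filter.Tendsto b Filter.atTop (nhds 0) := by
    obtain ⟨M, hM⟩ := hcomp.isBounded.exists_norm_le
    have l1 : Filter.Tendsto (fun n => ε n • c) Filter.atTop (nhds 0) := by
      simpa using hεl.smul_const c
    have l2 : Filter.Tendsto (fun n => ε n ^ 2 • q n) Filter.atTop (nhds 0) := by
      have l3 : Filter.Tendsto (fun n => ε n ^ 2 * M) Filter.atTop (nhds 0) := by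
        simpa using (hεl.pow 2).mul_const M
      refine squeeze_zero_norm (fun n => ?_) l3
      rw [norm_smul, Real.norm_of_nonneg (by positivity)]
      exact mul_le_mul_of_nonneg_left (hM _ (hqK n)) (by positivity)
    simpa using l2.sub l1
  obtain ⟨y, hy, p, φ, hφ, l1, l2⟩ := lim_normals (s := s) hcomp ha1 hqK
    (fun n => by rw [hqx]; exact hx n) hbl
    (fun n z hz => by rw [← hpt]; exact (ha2 n z hz).le)
  have hle : ∀ n, (inner ℝ (a n) c : ℝ) ≤ ε n * inner ℝ (a n) (q n) := by
    intro n
    have h1 := ha2 n (q n) (hqK n)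
    rw [hpt] at h1
    simp only [hb, inner_add_right, inner_sub_right, inner_smul_right] at h1
    have h2 := hεp n
    by_contra! h3
    nlinarith [mul_lt_mul_of_pos_left h3 h2]
  have hlim : (inner ℝ y c : ℝ) ≤ 0 * inner ℝ y p :=
    le_of_tendsto_of_tendsto' (l1.inner tendsto_const_nhds)
      ((hεl.comp hφ.tendsto_atTop).mul (l1.inner l2)) (fun n => hle (φ n))
  have := hc y hy
  linarith

lemma forward {K : Set E2} (hK : IsConvexBody K) (hs : 1 < minkAsym K)
    (h : ∀ x ∈ K, -((minkAsym K)⁻¹ • x) ∈ K) :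
    ∃ a p : Fin 3 → E2, (∀ i, a i ≠ 0 ∧ p i ∈ K ∧ -(minkAsym K • p i) ∈ K ∧ Supp K (a i) (p i)) ∧
      (0:E2) ∈ interior (convexHull ℝ {p 0, p 1, p 2}) ∧
      (0:E2) ∈ convexHull ℝ {a 0, a 1, a 2} := by
  have h0 := zero_int hK (by linarith) h
  obtain ⟨ι, _, z, w, hz, hind, hw, hw1, hsum⟩ :=
    eq_pos_convex_span_of_mem_convexHull (zero_mem_hull_s7 hK hs h)
  have hcard : Fintype.card ι ≤ 3 := by
    have := hind.card_le_finrank_succ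
    have h2 := Submodule.finrank_le (vectorSpan ℝ (Set.range z))
    rw [finrank_euclideanSpace_fin] at h2
    omega
  have hz' : ∀ i, z i ∈ normals K (minkAsym K) := fun i => hz ⟨i, rfl⟩
  have hz0 : ∀ i, z i ≠ 0 := fun i h => by have := (hz' i).1; simp [h] at this
  choose p hpK hpK' hsup using fun i => (hz' i).2
  generalize hN : Fintype.card ι = N at hcard
  have e : ι ≃ Fin N := Fintype.equivFinOfCardEq hN
  rw [← e.symm.sum_comp] at hw1 hsum
  interval_cases N
  · simp at hw1
  · simp at hsum
    exact absurd hsum (by simpa [hz0] using (hw _).ne')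
  · exfalso
    rw [Fin.sum_univ_two] at hsum
    set i := e.symm 0
    set j := e.symm 1
    have hv : w j • z j = -(w i • z i) := by rw [eq_neg_iff_add_eq_zero, add_comm]; exact hsum
    refine no_opposite h0 hs (v := w i • z i) (p := p i) (q := p j)
      (smul_ne_zero (hw i).ne' (hz0 i)) ?_ ?_ (hpK' i) (hpK' j)
    · intro x hx
      rw [real_inner_smul_left, real_inner_smul_left]
      exact mul_le_mul_of_nonneg_left (hsup i x hx) (hw i).le
    · rw [← hv]
      intro x hx
      rw [real_inner_smul_left, real_inner_smul_left]
      exact mul_le_mul_of_nonneg_left (hsup j x hx) (hw j).le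
  · have htop : affineSpan ℝ (Set.range z) = ⊤ := by
      rw [hind.affineSpan_eq_top_iff_card_eq_finrank_add_one, hN, finrank_euclideanSpace_fin]
    refine ⟨z ∘ e.symm, p ∘ e.symm, fun i => ⟨hz0 _, hpK _, hpK' _, hsup _⟩, ?_, ?_⟩
    · apply int_of_pos
      intro u hu
      have hmem : u ∈ affineSpan ℝ (Set.range z) := by rw [htop]; trivial
      obtain ⟨ν, hν, huν⟩ := eq_affineCombination_of_mem_affineSpan_of_fintype hmem
      rw [Finset.affineCombination_eq_linear_combination _ _ _ hν, ← e.symm.sum_comp,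
        Fin.sum_univ_three] at huν
      rw [Fin.sum_univ_three] at hsum
      simp only [Function.comp]
      set i := e.symm 0
      set j := e.symm 1
      set k := e.symm 2
      have hwi := hw i
      have hwj := hw j
      have hwk := hw k
      have red : ∀ t : ℝ, u = (ν i - t * w i) • z i + (ν j - t * w j) • z j
          + (ν k - t * w k) • z k := by
        intro t
        have : u = u - t • (w i • z i + w j • z j + w k • z k) := by rw [hsum]; simp
        rw [this, huν]; module
      have cases3 : (ν i / w i ≤ ν j / w j ∧ ν i / w i ≤ ν k / w k) ∨
          (ν j / w j ≤ ν i / w i ∧ ν j / w j ≤ ν k / w k) ∨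
          (ν k / w k ≤ ν i / w i ∧ ν k / w k ≤ ν j / w j) := by
        rcases le_total (ν i / w i) (ν j / w j) with h1 | h1 <;>
        rcases le_total (ν i / w i) (ν k / w k) with h2 | h2 <;>
        rcases le_total (ν j / w j) (ν k / w k) with h3 | h3 <;> grind
      rcases cases3 with ⟨h1, h2⟩ | ⟨h1, h2⟩ | ⟨h1, h2⟩
      · have r := red (ν i / w i)
        rw [div_mul_cancel₀ _ hwi.ne', sub_self, zero_smul, zero_add] at r
        rw [le_div_iff₀ hwj] at h1
        rw [le_div_iff₀ hwk] at h2
        exact Or.inr (key2 h0 hs (hz0 j) (hz0 k) (hsup j) (hsup k) (hpK' j) (hpK' k)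
          (sub_nonneg.2 h1) (sub_nonneg.2 h2) r hu)
      · have r := red (ν j / w j)
        rw [div_mul_cancel₀ _ hwj.ne', sub_self, zero_smul, add_zero] at r
        rw [le_div_iff₀ hwi] at h1
        rw [le_div_iff₀ hwk] at h2
        have := (key2 h0 hs (hz0 i) (hz0 k) (hsup i) (hsup k) (hpK' i) (hpK' k)
          (sub_nonneg.2 h1) (sub_nonneg.2 h2) r hu)
        tauto
      · have r := red (ν k / w k)
        rw [div_mul_cancel₀ _ hwk.ne', sub_self, zero_smul, add_zero] at r
        rw [le_div_iff₀ hwi] at h1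
        rw [le_div_iff₀ hwj] at h2
        have := (key2 h0 hs (hz0 i) (hz0 j) (hsup i) (hsup j) (hpK' i) (hpK' j)
          (sub_nonneg.2 h1) (sub_nonneg.2 h2) r hu)
        tauto
    · rw [Fin.sum_univ_three] at hw1 hsum
      exact mem_hull3.2 ⟨_, _, _, (hw _).le, (hw _).le, (hw _).le, hw1, hsum⟩

lemma perp_param {d : E2} (hd : d ≠ 0) : ∃ v : E2, v ≠ 0 ∧
    ∀ b : E2, (inner ℝ b d : ℝ) = 0 → ∃ t : ℝ, b = t • v := by
  have hd2 : d 0 ^ 2 + d 1 ^ 2 ≠ 0 := by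
    intro h
    apply hd
    ext i
    fin_cases i
    · simp; nlinarith [sq_nonneg (d 0), sq_nonneg (d 1)]
    · simp; nlinarith [sq_nonneg (d 0), sq_nonneg (d 1)]
  refine ⟨!₂[-d 1, d 0], ?_, fun b hb => ?_⟩
  · intro h
    have h1 := congrFun (congrArg WithLp.ofLp h) 0
    have h2 := congrFun (congrArg WithLp.ofLp h) 1
    simp at h1 h2
    apply hd2; rw [h1, h2]; ring
  · refine ⟨(b 1 * d 0 - b 0 * d 1) / (d 0 ^ 2 + d 1 ^ 2), ?_⟩
    have hb' : b 0 * d 0 + b 1 * d 1 = 0 := by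
      simp [PiLp.inner_apply, Fin.sum_univ_two] at hb
      linarith
    ext i
    fin_cases i
    · simp
      field_simp
      linear_combination d 0 * hb'
    · simp
      field_simp
      linear_combination d 1 * hb'

lemma backward {K : Set E2} {s : ℝ} (hs : 1 < s) (h0 : (0:E2) ∈ interior K)
    {a p : Fin 3 → E2} (ha : ∀ i, a i ≠ 0) (hp : ∀ i, -(s • p i) ∈ K)
    (hsup : ∀ i, Supp K (a i) (p i)) {w : Fin 3 → ℝ} (hw : ∀ i, 0 ≤ w i) (hw1 : ∑ i, w i = 1)
    (hsum : ∑ i, w i • a i = 0) {d : E2} (hd : ∀ x ∈ K, d - s⁻¹ • x ∈ K) : d = 0 := by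
  by_contra hd0
  have hle : ∀ i, w i * (inner ℝ (a i) d : ℝ) ≤ 0 := by
    intro i
    have h1 := hsup i _ (hd _ (hp i))
    rw [smul_neg, smul_smul, inv_mul_cancel₀ (by linarith), one_smul, sub_neg_eq_add,
      inner_add_right] at h1
    exact mul_nonpos_of_nonneg_of_nonpos (hw i) (by linarith)
  have hz : ∑ i, w i * (inner ℝ (a i) d : ℝ) = 0 := by
    have : (inner ℝ (∑ i, w i • a i) d : ℝ) = 0 := by rw [hsum, inner_zero_left]
    simpa only [sum_inner, real_inner_smul_left] using this
  have hz' : ∀ i, w i * (inner ℝ (a i) d : ℝ) = 0 := fun i =>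
    (Finset.sum_eq_zero_iff_of_nonpos (fun i _ => hle i)).1 hz i (Finset.mem_univ i)
  obtain ⟨v, hv, hpar⟩ := perp_param hd0
  choose t ht using fun i => hpar (w i • a i) (by rw [real_inner_smul_left]; exact hz' i)
  have ht0 : ∑ i, t i = 0 := by
    have : (∑ i, t i) • v = 0 := by
      rw [Finset.sum_smul, ← hsum]
      exact Finset.sum_congr rfl fun i _ => (ht i).symm
    exact (smul_eq_zero.1 this).resolve_right hv
  obtain ⟨k, hk⟩ : ∃ k, t k ≠ 0 := by
    by_contra! hall
    have : ∀ i, w i = 0 := fun i => by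
      have := ht i
      rw [hall i, zero_smul] at this
      exact (smul_eq_zero.1 this).resolve_right (ha i)
    simp [this] at hw1
  have hpos : ∃ i, 0 < t i := by
    obtain ⟨i, _, hi⟩ := Finset.exists_pos_of_sum_zero_of_exists_nonzero t ht0 ⟨k, by simp, hk⟩
    exact ⟨i, hi⟩
  have hneg : ∃ i, t i < 0 := by
    obtain ⟨i, _, hi⟩ := Finset.exists_pos_of_sum_zero_of_exists_nonzero (fun i => - t i)
      (s := Finset.univ) (by rw [Finset.sum_neg_distrib, ht0, neg_zero])
      ⟨k, by simp, neg_ne_zero.2 hk⟩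
    exact ⟨i, by linarith⟩
  obtain ⟨i, hi⟩ := hpos
  obtain ⟨j, hj⟩ := hneg
  have hS : ∀ i, ∀ x ∈ K, t i * (inner ℝ v x : ℝ) ≤ t i * inner ℝ v (p i) := by
    intro i x hx
    rw [← real_inner_smul_left, ← real_inner_smul_left, ← ht, real_inner_smul_left,
      real_inner_smul_left]
    exact mul_le_mul_of_nonneg_left (hsup i x hx) (hw i)
  refine no_opposite h0 hs hv (p := p i) (q := p j) (fun x hx => ?_) (fun x hx => ?_) (hp i) (hp j)
  · exact le_of_mul_le_mul_left (hS i x hx) hi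
  · have := hS j x hx
    rw [inner_neg_left, inner_neg_left]
    nlinarith

theorem stmt7 (K : Set E2) (hK : IsConvexBody K) (hs : 1 < minkAsym K) :
    MinkCentered K ↔
      ∃ p1 p2 p3 a1 a2 a3 : E2,
        p1 ∈ frontier K ∩ ((-(minkAsym K)⁻¹) • K) ∧
        p2 ∈ frontier K ∩ ((-(minkAsym K)⁻¹) • K) ∧
        p3 ∈ frontier K ∩ ((-(minkAsym K)⁻¹) • K) ∧
        a1 ≠ 0 ∧ a2 ≠ 0 ∧ a3 ≠ 0 ∧
        (∀ x ∈ K, (inner ℝ a1 x : ℝ) ≤ inner ℝ a1 p1) ∧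
        (∀ x ∈ K, (inner ℝ a2 x : ℝ) ≤ inner ℝ a2 p2) ∧
        (∀ x ∈ K, (inner ℝ a3 x : ℝ) ≤ inner ℝ a3 p3) ∧
        (0 : E2) ∈ interior (convexHull ℝ {p1, p2, p3}) ∧
        (0 : E2) ∈ convexHull ℝ {a1, a2, a3} := by
  have hs0 : 0 < minkAsym K := by linarith
  rw [MinkCentered, centered_iff hs0]
  constructor
  · intro h
    obtain ⟨a, p, hap, h1, h2⟩ := forward hK hs h
    have hf : ∀ i, p i ∈ frontier K ∩ ((-(minkAsym K)⁻¹) • K) := fun i =>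
      ⟨supp_frontier (hap i).1 (hap i).2.1 (hap i).2.2.2, (mem_neg_inv hs0).2 (hap i).2.2.1⟩
    exact ⟨p 0, p 1, p 2, a 0, a 1, a 2, hf 0, hf 1, hf 2, (hap 0).1, (hap 1).1, (hap 2).1,
      (hap 0).2.2.2, (hap 1).2.2.2, (hap 2).2.2.2, h1, h2⟩
  · rintro ⟨p1, p2, p3, a1, a2, a3, hp1, hp2, hp3, ha1, ha2, ha3, s1, s2, s3, hint, hhull⟩
    have hcl := hK.2.1.isClosed
    have h0 : (0:E2) ∈ interior K := by
      refine interior_mono (convexHull_min ?_ hK.1) hint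
      rintro x (rfl | rfl | rfl)
      · exact hcl.frontier_subset hp1.1
      · exact hcl.frontier_subset hp2.1
      · exact hcl.frontier_subset hp3.1
    obtain ⟨w1, w2, w3, hw1, hw2, hw3, hw, hsum⟩ := mem_hull3.1 hhull
    obtain ⟨d, hd⟩ := asym_attained hK hs
    have hd0 : d = 0 := by
      refine backward (a := ![a1, a2, a3]) (p := ![p1, p2, p3]) (w := ![w1, w2, w3]) hs h0
        ?_ ?_ ?_ ?_ ?_ ?_ hd
      · intro i; fin_cases i <;> simpa
      · intro i
        fin_cases i
        · exact (mem_neg_inv hs0).1 hp1.2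
        · exact (mem_neg_inv hs0).1 hp2.2
        · exact (mem_neg_inv hs0).1 hp3.2
      · intro i
        fin_cases i
        · exact s1
        · exact s2
        · exact s3
      · intro i; fin_cases i <;> simpa
      · simpa [Fin.sum_univ_three] using hw
      · simpa [Fin.sum_univ_three] using hsum
    intro x hx
    simpa [hd0] using hd x hx
end
end
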